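/- arXiv:1907.07926 — 5 statements merged into one kernel-verified Lean document; each statement's English description precedes it below -/
import Mathlib

section
/- Let 2 < q < 4 and μ ≥ (√3/2)·π. Then F_{6,q} is unbounded below on the mass-constraint set: for every M ∈ ℝ there exists u ∈ H¹(ℝ) with ‖u‖₂² = μ and F_{6,q}(u) < M. In particular no ground state of F_{6,q} at mass μ exists. -/
open MeasureTheory Real Set

noncomputable section

def IsH1 (u u' : ℝ → ℝ) : Prop :=
  Continuous u ∧ Integrable (fun x => (u x) ^ 2) ∧ Integrable (fun x => (u' x) ^ 2) ∧
    ∀ a b : ℝ, a ≤ b → u b - u a = ∫ t in a..b, u' t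

def mass (u : ℝ → ℝ) : ℝ := ∫ x, (u x) ^ 2

def Dfun (q : ℝ) (u u' : ℝ → ℝ) : ℝ :=
  (1 / 2) * (∫ x, (u' x) ^ 2) - (1 / q) * |u 0| ^ q

def Ffun (p q : ℝ) (u u' : ℝ → ℝ) : ℝ :=
  (1 / 2) * (∫ x, (u' x) ^ 2) - (1 / p) * (∫ x, |u x| ^ p) - (1 / q) * |u 0| ^ q

open Filter Topology

lemma aux_sinh_top : Tendsto Real.sinh atTop atTop :=
  tendsto_atTop_mono' _ ((eventually_ge_atTop 0).mono
    fun _ hx => Real.self_le_sinh_iff.2 hx) tendsto_id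

lemma aux_sinh_bot : Tendsto Real.sinh atBot atBot := by
  have h := tendsto_neg_atTop_atBot.comp (aux_sinh_top.comp tendsto_neg_atBot_atTop)
  refine h.congr fun x => ?_
  simp [Real.sinh_neg]

lemma aux_deriv_arctan (x : ℝ) :
    HasDerivAt (fun x => Real.arctan (Real.sinh x)) (Real.cosh x)⁻¹ x := by
  have h := (Real.hasDerivAt_sinh x).arctan
  convert h using 1
  have hc := Real.cosh_pos x
  rw [← Real.cosh_sq']
  field_simp

lemma aux_lim_top : Tendsto (fun x => Real.arctan (Real.sinh x)) atTop (𝓝 (π / 2)) :=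
  (tendsto_nhds_of_tendsto_nhdsWithin Real.tendsto_arctan_atTop).comp aux_sinh_top

lemma aux_lim_bot : Tendsto (fun x => Real.arctan (Real.sinh x)) atBot (𝓝 (-(π / 2))) :=
  (tendsto_nhds_of_tendsto_nhdsWithin Real.tendsto_arctan_atBot).comp aux_sinh_bot

lemma aux_int_sech : Integrable (fun x => (Real.cosh x)⁻¹) := by
  have hc : Continuous (fun x => (Real.cosh x)⁻¹) :=
    Real.continuous_cosh.inv₀ fun x => (Real.cosh_pos x).ne'
  refine integrable_of_intervalIntegral_norm_bounded (l := atTop) (a := fun i : ℝ => -i)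
    (b := fun i : ℝ => i) π (fun i => hc.integrableOn_Ioc) tendsto_neg_atTop_atBot tendsto_id
    (Eventually.of_forall fun i => ?_)
  have : ∀ x, ‖(Real.cosh x)⁻¹‖ = (Real.cosh x)⁻¹ := fun x => by
    rw [Real.norm_of_nonneg (inv_nonneg.2 (Real.cosh_pos x).le)]
  simp only [this]
  rw [intervalIntegral.integral_eq_sub_of_hasDerivAt (fun x _ => aux_deriv_arctan x)
    (hc.intervalIntegrable _ _)]
  have h1 := Real.arctan_lt_pi_div_two (Real.sinh i)
  have h2 := Real.neg_pi_div_two_lt_arctan (Real.sinh (-i))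
  linarith

lemma aux_integral_sech : ∫ x, (Real.cosh x)⁻¹ = π := by
  rw [integral_of_hasDerivAt_of_tendsto aux_deriv_arctan aux_int_sech aux_lim_bot aux_lim_top]
  ring

lemma aux_int_sech3 : Integrable (fun x => ((Real.cosh x)⁻¹) ^ 3) := by
  have hc : Continuous (fun x => (Real.cosh x)⁻¹) :=
    Real.continuous_cosh.inv₀ fun x => (Real.cosh_pos x).ne'
  refine aux_int_sech.mono (hc.pow 3).aestronglyMeasurable (Eventually.of_forall fun x => ?_)
  have h1 := inv_le_one_of_one_le₀ (Real.one_le_cosh x)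
  have h0 := inv_nonneg.2 (Real.cosh_pos x).le
  rw [Real.norm_of_nonneg (pow_nonneg h0 3), Real.norm_of_nonneg h0]
  exact pow_le_of_le_one h0 h1 (by norm_num)

lemma aux_decay (l : Filter ℝ) (h : Tendsto (fun x => |Real.sinh x|) l atTop) :
    Tendsto (fun x => Real.sinh x * ((Real.cosh x)⁻¹) ^ 2) l (𝓝 0) := by
  refine squeeze_zero_norm (fun x => ?_) h.inv_tendsto_atTop
  have hp := Real.cosh_pos x
  have hs := Real.cosh_sq x
  rw [norm_mul, Real.norm_eq_abs, norm_pow, norm_inv, Real.norm_of_nonneg hp.le, Pi.inv_apply]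
  rcases eq_or_ne (Real.sinh x) 0 with h0 | h0
  · simp [h0]
  · have ha : 0 < |Real.sinh x| := abs_pos.2 h0
    rw [inv_pow, ← div_eq_mul_inv, div_le_iff₀ (by positivity), ← div_eq_inv_mul,
      le_div_iff₀ ha, hs, abs_mul_abs_self]
    nlinarith

lemma aux_integral_sech3 : ∫ x, ((Real.cosh x)⁻¹) ^ 3 = π / 2 := by
  have hd : ∀ x, HasDerivAt (fun x => (1 / 2) * (Real.arctan (Real.sinh x)
      + Real.sinh x * ((Real.cosh x)⁻¹) ^ 2)) (((Real.cosh x)⁻¹) ^ 3) x := by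
    intro x
    have hp := Real.cosh_pos x
    have h := ((aux_deriv_arctan x).add ((Real.hasDerivAt_sinh x).mul
      (((Real.hasDerivAt_cosh x).inv hp.ne').pow 2))).const_mul (1 / 2)
    refine h.congr_deriv ?_
    simp only [Pi.inv_apply, Pi.pow_apply]
    norm_num
    field_simp
    have hs := Real.cosh_sq x
    linear_combination 2 * hs
  rw [integral_of_hasDerivAt_of_tendsto hd aux_int_sech3
    ((aux_lim_bot.add (aux_decay _ (tendsto_abs_atBot_atTop.comp aux_sinh_bot))).const_mul _)
    ((aux_lim_top.add (aux_decay _ (tendsto_abs_atTop_atTop.comp aux_sinh_top))).const_mul _)]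
  ring

lemma aux_family (a L : ℝ) (ha : 0 < a) (hL : 0 < L) :
    ∃ u u' : ℝ → ℝ, IsH1 u u' ∧ mass u = a * π ∧ u 0 = √(L * a) ∧
      (∫ x, (u' x) ^ 2) = L ^ 2 * a * π / 8 ∧ (∫ x, |u x| ^ (6 : ℝ)) = L ^ 2 * a ^ 3 * π / 2 := by
  have hpos : ∀ x, 0 < L * a * (Real.cosh (L * x))⁻¹ := fun x => by
    have := Real.cosh_pos (L * x); positivity
  let u : ℝ → ℝ := fun x => √(L * a * (Real.cosh (L * x))⁻¹)
  let u' : ℝ → ℝ := fun x => -(L / 2) * (Real.sinh (L * x) * (Real.cosh (L * x))⁻¹) * u x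
  have hu2 : ∀ x, u x ^ 2 = L * a * (Real.cosh (L * x))⁻¹ := fun x => Real.sq_sqrt (hpos x).le
  have hu0 : ∀ x, 0 < u x := fun x => Real.sqrt_pos.2 (hpos x)
  have hcosh : Continuous (fun x => (Real.cosh (L * x))⁻¹) :=
    (Real.continuous_cosh.comp (continuous_const.mul continuous_id)).inv₀
      fun x => (Real.cosh_pos _).ne'
  have huc : Continuous u := Real.continuous_sqrt.comp (continuous_const.mul hcosh)
  have hu'c : Continuous u' :=
    (continuous_const.mul ((Real.continuous_sinh.comp
      (continuous_const.mul continuous_id)).mul hcosh)).mul huc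
  have hu'2 : ∀ x, u' x ^ 2 = L ^ 3 * a / 4 *
      ((Real.cosh (L * x))⁻¹ - ((Real.cosh (L * x))⁻¹) ^ 3) := by
    intro x
    have hp := Real.cosh_pos (L * x)
    have hs := Real.cosh_sq (L * x)
    have : u' x ^ 2 = (-(L / 2) * (Real.sinh (L * x) * (Real.cosh (L * x))⁻¹)) ^ 2 * u x ^ 2 := by
      simp only [u', mul_pow]
    rw [this, hu2]
    field_simp
    linear_combination (-4) * hs
  have hu6 : ∀ x, |u x| ^ (6 : ℝ) = L ^ 3 * a ^ 3 * ((Real.cosh (L * x))⁻¹) ^ 3 := by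
    intro x
    rw [abs_of_pos (hu0 x), show (6 : ℝ) = ((6 : ℕ) : ℝ) by norm_num, Real.rpow_natCast,
      show u x ^ 6 = (u x ^ 2) ^ 3 by ring, hu2]
    ring
  have hder : ∀ x, HasDerivAt u (u' x) x := by
    intro x
    have hp := Real.cosh_pos (L * x)
    have h1 : HasDerivAt (fun x => L * x) L x := by
      simpa using (hasDerivAt_id x).const_mul L
    have h := (((h1.cosh).inv hp.ne').const_mul (L * a)).sqrt (hpos x).ne'
    refine h.congr_deriv ?_
    have hne := (hu0 x).ne'
    have h2 := hu2 x
    change _ / (2 * u x) = -(L / 2) * (Real.sinh (L * x) * (Real.cosh (L * x))⁻¹) * u x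
    rw [div_eq_iff (by positivity)]
    calc _ = -(L * (Real.sinh (L * x) * (Real.cosh (L * x))⁻¹)) * (L * a * (Real.cosh (L * x))⁻¹) := by
          field_simp
      _ = _ := by rw [← h2]; ring
  have i1 : Integrable (fun x => (Real.cosh (L * x))⁻¹) := aux_int_sech.comp_mul_left' hL.ne'
  have i3 : Integrable (fun x => ((Real.cosh (L * x))⁻¹) ^ 3) :=
    aux_int_sech3.comp_mul_left' hL.ne'
  have e1 : ∫ x, (Real.cosh (L * x))⁻¹ = L⁻¹ * π := by
    have := Measure.integral_comp_mul_left (fun x => (Real.cosh x)⁻¹) L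
    rw [this, aux_integral_sech, abs_of_pos (inv_pos.2 hL), smul_eq_mul]
  have e3 : ∫ x, ((Real.cosh (L * x))⁻¹) ^ 3 = L⁻¹ * (π / 2) := by
    have := Measure.integral_comp_mul_left (fun x => ((Real.cosh x)⁻¹) ^ 3) L
    rw [this, aux_integral_sech3, abs_of_pos (inv_pos.2 hL), smul_eq_mul]
  refine ⟨u, u', ⟨huc, ?_, ?_, ?_⟩, ?_, ?_, ?_, ?_⟩
  · simp only [hu2]; exact i1.const_mul _
  · simp only [hu'2]; exact (i1.sub i3).const_mul _
  · intro x y _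
    exact (intervalIntegral.integral_eq_sub_of_hasDerivAt (fun x _ => hder x)
      (hu'c.intervalIntegrable _ _)).symm
  · simp only [mass, hu2]
    rw [integral_const_mul, e1]; field_simp
  · simp [u]
  · simp only [hu'2]
    rw [integral_const_mul, integral_sub i1 i3, e1, e3]; field_simp; ring
  · simp only [hu6]
    rw [integral_const_mul, e3]; field_simp

theorem stmt10 (q μ : ℝ) (hq : 2 < q) (hq' : q < 4)
    (hμ : (Real.sqrt 3 / 2) * Real.pi ≤ μ) :
    (∀ M : ℝ, ∃ u u' : ℝ → ℝ, IsH1 u u' ∧ mass u = μ ∧ Ffun 6 q u u' < M) ∧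
    ¬ (∃ u u' : ℝ → ℝ, IsH1 u u' ∧ mass u = μ ∧
        ∀ v v' : ℝ → ℝ, IsH1 v v' → mass v = μ → Ffun 6 q u u' ≤ Ffun 6 q v v') := by
  have hπ := Real.pi_pos
  have key : ∀ M : ℝ, ∃ u u' : ℝ → ℝ, IsH1 u u' ∧ mass u = μ ∧ Ffun 6 q u u' < M := by
    intro M
    have h3 : 0 < √(3 : ℝ) := Real.sqrt_pos.2 (by norm_num)
    have h3s : √(3 : ℝ) ^ 2 = 3 := Real.sq_sqrt (by norm_num)
    obtain ⟨a, haμ⟩ : ∃ a, μ = a * π := ⟨μ / π, by field_simp⟩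
    have ha' : √3 / 2 ≤ a := by
      rw [haμ] at hμ; exact le_of_mul_le_mul_right hμ hπ
    have ha : 0 < a := lt_of_lt_of_le (by positivity) ha'
    have ha2 : 3 / 4 ≤ a ^ 2 := by nlinarith
    have hT : 1 ≤ 1 + q * |M| := by
      have := mul_nonneg (by linarith : (0 : ℝ) ≤ q) (abs_nonneg M); linarith
    obtain ⟨u, u', h1, h2, h0, hd, h6⟩ := aux_family a ((1 + q * |M|) / a) ha (by positivity)
    refine ⟨u, u', h1, h2.trans haμ.symm, ?_⟩
    rw [Ffun, hd, h6, h0, div_mul_cancel₀ _ ha.ne', abs_of_nonneg (Real.sqrt_nonneg _)]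
    have hp : 1 + q * |M| ≤ √(1 + q * |M|) ^ q := by
      calc 1 + q * |M| = √(1 + q * |M|) ^ (2 : ℝ) := by
            rw [Real.rpow_two, Real.sq_sqrt (by linarith)]
        _ ≤ _ := Real.rpow_le_rpow_of_exponent_le (Real.one_le_sqrt.2 hT) hq.le
    have hp2 : 1 / q + |M| ≤ 1 / q * √(1 + q * |M|) ^ q := by
      calc 1 / q + |M| = 1 / q * (1 + q * |M|) := by field_simp
        _ ≤ _ := by gcongr
    have hq0 : 0 < 1 / q := by positivity
    generalize (1 + q * |M|) / a = L
    have hneg : 0 ≤ L ^ 2 * a * π * (a ^ 2 - 3 / 4) :=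
      mul_nonneg (by positivity) (by linarith)
    have := neg_abs_le M
    nlinarith
  refine ⟨key, ?_⟩
  rintro ⟨u, u', _, _, hmin⟩
  obtain ⟨v, v', hv, hm, hlt⟩ := key (Ffun 6 q u u')
  exact absurd (hmin v v' hv hm) (not_le.2 hlt)
end
end

section
/- Let 2 < p < 6 and 0 < μ < 2. Then F_{p,4} is bounded below on the set of u ∈ H¹(ℝ) with ‖u‖₂² = μ, there exists u₀ in this set with F_{p,4}(u₀) < 0, there exists a ground state of F_{p,4} at mass μ, and any two nonnegative ground states of F_{p,4} at mass μ coincide. -/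
open MeasureTheory Real Set

noncomputable section

open Filter Topology

/-- A well-behaved version of `IsH1`, in which the weak derivative is locally integrable. -/
structure NiceH1 (u u' : ℝ → ℝ) : Prop where
  cont : Continuous u
  int_sq : Integrable (fun x => (u x) ^ 2)
  int_dsq : Integrable (fun x => (u' x) ^ 2)
  loc : ∀ a b : ℝ, IntervalIntegrable u' volume a b
  ftc : ∀ a b : ℝ, u b - u a = ∫ t in a..b, u' t

lemma IsH1.nice {u u' : ℝ → ℝ} (h : IsH1 u u') (hm : 0 < mass u) : NiceH1 u u' := by
  obtain ⟨hc, h2, h3, h4⟩ := h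
  have key : ∀ a b : ℝ, a ≤ b → IntervalIntegrable u' volume a b := by
    by_contra hcon
    push Not at hcon
    obtain ⟨a, b, hab, hn⟩ := hcon
    have hbig : ∀ a' b' : ℝ, a' ≤ a → b ≤ b' → u b' = u a' := by
      intro a' b' ha hb
      have h5 := h4 a' b' (by linarith)
      rw [intervalIntegral.integral_undef] at h5
      · linarith
      · intro hI
        apply hn
        apply hI.mono_set
        rw [uIcc_of_le hab, uIcc_of_le (by linarith)]
        exact Icc_subset_Icc ha hb
    have hub : u b = 0 := by
      have h6 : IntegrableOn (fun _ : ℝ => (u b)^2) (Ioi b) := by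
        refine (h2.integrableOn (s := Ioi b)).congr_fun ?_ measurableSet_Ioi
        intro x hx
        have hx' : b < x := hx
        have e1 := hbig a x le_rfl hx'.le
        have e2 := hbig a b le_rfl le_rfl
        simp only
        rw [e1, e2]
      rw [integrableOn_const_iff] at h6
      simpa using h6
    have hz : ∀ x, u x = 0 := by
      intro x
      rcases le_total x a with hx | hx
      · rw [← hbig x b hx le_rfl, hub]
      rcases le_total b x with hx' | hx'
      · rw [hbig a x le_rfl hx', ← hbig a b le_rfl le_rfl, hub]
      by_cases hI : IntervalIntegrable u' volume a x
      · have hJ : ¬ IntervalIntegrable u' volume x b := fun hJ => hn (hI.trans hJ)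
        have := h4 x b hx'
        rw [intervalIntegral.integral_undef hJ] at this
        linarith
      · have := h4 a x hx
        rw [intervalIntegral.integral_undef hI] at this
        have := hbig a b le_rfl le_rfl
        linarith
    simp [mass, hz] at hm
  refine ⟨hc, h2, h3, ?_, ?_⟩
  · intro a b
    rcases le_total a b with hab | hab
    · exact key a b hab
    · exact (key b a hab).symm
  · intro a b
    rcases le_total a b with hab | hab
    · exact h4 a b hab
    · rw [intervalIntegral.integral_symm, ← h4 b a hab]; ring

lemma NiceH1.isH1 {u u' : ℝ → ℝ} (h : NiceH1 u u') : IsH1 u u' :=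
  ⟨h.cont, h.int_sq, h.int_dsq, fun a b _ => h.ftc a b⟩

lemma NiceH1.locInt {u u' : ℝ → ℝ} (h : NiceH1 u u') : LocallyIntegrable u' := by
  rw [locallyIntegrable_iff]
  intro k hk
  obtain ⟨R, hR⟩ := hk.isBounded.subset_closedBall 0
  rw [Real.closedBall_eq_Icc] at hR
  have := (h.loc (0 - R) (0 + R)).symm.1
  have h2 := h.loc (0 - R) (0 + R)
  rcases le_total (0 - R) (0 + R) with h0 | h0
  · rw [intervalIntegrable_iff_integrableOn_Icc_of_le h0] at h2
    exact h2.mono_set hR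
  · rw [intervalIntegrable_iff] at h2
    have : Icc (0 - R) (0 + R) ⊆ {0 + R} := by
      intro x hx; simp only [mem_Icc, mem_singleton_iff] at *; linarith [hx.1, hx.2]
    apply IntegrableOn.mono_set _ (hR.trans this)
    simp

lemma NiceH1.aesm {u u' : ℝ → ℝ} (h : NiceH1 u u') : AEStronglyMeasurable u' volume :=
  h.locInt.aestronglyMeasurable

lemma NiceH1.ae_deriv {u u' : ℝ → ℝ} (h : NiceH1 u u') : ∀ᵐ x, HasDerivAt u (u' x) x := by
  filter_upwards [LocallyIntegrable.ae_hasDerivAt_integral h.locInt] with x hx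
  have h1 := (hx 0).const_add (u 0)
  convert! h1 using 1
  ext y
  have := h.ftc 0 y
  linarith

lemma NiceH1.ac {u u' : ℝ → ℝ} (h : NiceH1 u u') (a b : ℝ) :
    AbsolutelyContinuousOnInterval u a b := by
  have := (h.loc a b).absolutelyContinuousOnInterval_intervalIntegral (c := a) (by simp)
  rw [absolutelyContinuousOnInterval_iff] at this ⊢
  convert! this using 10 with ε hε δ hδ E hE i
  simp only [Real.dist_eq]
  rw [← h.ftc, ← h.ftc]
  congr 1
  ring

lemma NiceH1.chain {u u' : ℝ → ℝ} (h : NiceH1 u u') {G g : ℝ → ℝ} (hg : Continuous g)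
    (hG : ∀ s, HasDerivAt G (g s) s) (a b : ℝ) :
    G (u b) - G (u a) = ∫ t in a..b, g (u t) * u' t := by
  obtain ⟨R, hR⟩ := (isCompact_uIcc (a := a) (b := b)).exists_bound_of_continuousOn
    h.cont.continuousOn
  obtain ⟨C, hC⟩ := (isCompact_Icc (a := -R) (b := R)).exists_bound_of_continuousOn
    hg.continuousOn
  have hlip : ∀ x ∈ uIcc a b, ∀ y ∈ uIcc a b, dist (G (u x)) (G (u y)) ≤ C * dist (u x) (u y) := by
    intro x hx y hy
    have h1 : ∀ z ∈ uIcc a b, u z ∈ Icc (-R) R := fun z hz => abs_le.1 (hR z hz)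
    have := (convex_Icc (-R) R).norm_image_sub_le_of_norm_hasDerivWithin_le
      (fun s _ => (hG s).hasDerivWithinAt) hC (h1 y hy) (h1 x hx)
    simpa [dist_eq_norm] using this
  have hac : AbsolutelyContinuousOnInterval (fun x => G (u x)) a b := by
    have h0 := h.ac a b
    unfold AbsolutelyContinuousOnInterval at h0 ⊢
    have h1 := h0.const_mul C
    rw [mul_zero] at h1
    refine squeeze_zero' ?_ ?_ h1
    · exact Eventually.of_forall fun E => Finset.sum_nonneg fun i _ => dist_nonneg
    · have hm : ∀ᶠ E in (AbsolutelyContinuousOnInterval.totalLengthFilter ⊓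
          𝓟 (AbsolutelyContinuousOnInterval.disjWithin a b)),
          E ∈ AbsolutelyContinuousOnInterval.disjWithin a b :=
        Filter.mem_inf_of_right (mem_principal_self _)
      filter_upwards [hm] with E hE
      rw [Finset.mul_sum]
      apply Finset.sum_le_sum
      intro i hi
      exact hlip _ (hE.1 i hi).1 _ (hE.1 i hi).2
  rw [← hac.integral_deriv_eq_sub]
  apply intervalIntegral.integral_congr_ae
  filter_upwards [h.ae_deriv] with x hx _
  exact ((hG (u x)).comp x hx).deriv

lemma NiceH1.int_mul {u u' : ℝ → ℝ} (h : NiceH1 u u') : Integrable (fun x => u x * u' x) := by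
  refine ((h.int_sq.add h.int_dsq)).mono'
    (h.cont.aestronglyMeasurable.mul h.aesm) ?_
  refine Eventually.of_forall fun x => ?_
  simp only [Real.norm_eq_abs, Pi.add_apply]
  rw [abs_le]
  constructor <;> nlinarith [sq_nonneg (u x + u' x), sq_nonneg (u x - u' x)]

lemma NiceH1.tendsto_top {u u' : ℝ → ℝ} (h : NiceH1 u u') : Tendsto u atTop (𝓝 0) := by
  have hch := h.chain (G := fun s => s^2) (g := fun s => 2 * s) (by fun_prop)
    (fun s => by simpa using hasDerivAt_pow 2 s) 0
  have hI : Integrable (fun t => 2 * u t * u' t) := by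
    simpa [mul_assoc] using h.int_mul.const_mul 2
  have hlim := intervalIntegral_tendsto_integral_Ioi 0 hI.integrableOn tendsto_id
  have hl2 : Tendsto (fun x => (u x)^2) atTop (𝓝 ((u 0)^2 + ∫ t in Ioi 0, 2 * u t * u' t)) := by
    refine (hlim.const_add ((u 0)^2)).congr ?_
    intro x
    have := hch x
    simp only [id] at *
    linarith
  set L := (u 0)^2 + ∫ t in Ioi 0, 2 * u t * u' t with hL
  have hL0 : L = 0 := by
    by_contra hne
    have hLp : 0 < L := lt_of_le_of_ne (ge_of_tendsto' hl2 fun x => sq_nonneg _) (Ne.symm hne)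
    have hev := hl2.eventually (lt_mem_nhds (half_lt_self hLp))
    obtain ⟨X, hX⟩ := eventually_atTop.1 hev
    have : IntegrableOn (fun _ : ℝ => L/2) (Ioi X) := by
      refine (h.int_sq.integrableOn (s := Ioi X)).mono' (by fun_prop) ?_
      rw [ae_restrict_iff' measurableSet_Ioi]
      refine Eventually.of_forall fun x hx => ?_
      rw [Real.norm_eq_abs, abs_of_pos (by positivity)]
      exact (hX x (le_of_lt hx)).le
    rw [integrableOn_const_iff] at this
    simp at this
    linarith
  rw [hL0] at hl2
  have := hl2.sqrt
  simp only [Real.sqrt_sq_eq_abs, Real.sqrt_zero] at this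
  exact (tendsto_zero_iff_abs_tendsto_zero _).2 this

lemma NiceH1.refl {u u' : ℝ → ℝ} (h : NiceH1 u u') :
    NiceH1 (fun x => u (-x)) (fun x => - u' (-x)) := by
  refine ⟨h.cont.comp continuous_neg, h.int_sq.comp_neg, ?_, ?_, ?_⟩
  · simpa using h.int_dsq.comp_neg
  · intro a b
    have := (h.loc (-a) (-b)).comp_sub_left 0
    have h2 := this.neg
    simp only [zero_sub, neg_neg] at h2
    exact h2
  · intro a b
    simp only [intervalIntegral.integral_neg, intervalIntegral.integral_comp_neg]
    rw [← h.ftc]; ring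

lemma NiceH1.trans {u u' : ℝ → ℝ} (h : NiceH1 u u') (z : ℝ) :
    NiceH1 (fun x => u (x + z)) (fun x => u' (x + z)) := by
  refine ⟨h.cont.comp (continuous_add_const z), h.int_sq.comp_add_right z,
    h.int_dsq.comp_add_right z, ?_, ?_⟩
  · intro a b
    have := (h.loc (a + z) (b + z)).comp_add_right z
    simpa using this
  · intro a b
    rw [intervalIntegral.integral_comp_add_right, ← h.ftc]

lemma NiceH1.neg {u u' : ℝ → ℝ} (h : NiceH1 u u') :
    NiceH1 (fun x => - u x) (fun x => - u' x) := by
  refine ⟨h.cont.neg, by simpa using h.int_sq, by simpa using h.int_dsq,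
    fun a b => (h.loc a b).neg, ?_⟩
  intro a b
  rw [intervalIntegral.integral_neg, ← h.ftc]; ring

lemma NiceH1.tendsto_bot {u u' : ℝ → ℝ} (h : NiceH1 u u') : Tendsto u atBot (𝓝 0) := by
  have := h.refl.tendsto_top.comp tendsto_neg_atBot_atTop
  simpa [Function.comp_def] using this

lemma NiceH1.exists_max {u u' : ℝ → ℝ} (h : NiceH1 u u') :
    ∃ z, ∀ x, |u x| ≤ |u z| := by
  by_cases hz : ∀ x, u x = 0
  · exact ⟨0, by simp [hz]⟩
  push Not at hz
  obtain ⟨x₀, hx₀⟩ := hz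
  have ht : Tendsto u (cocompact ℝ) (𝓝 0) := by
    rw [cocompact_eq_atBot_atTop]
    exact h.tendsto_bot.sup h.tendsto_top
  have ht' : Tendsto (fun x => |u x|) (cocompact ℝ) (𝓝 0) := by simpa using ht.abs
  have hev := ht'.eventually (gt_mem_nhds (abs_pos.2 hx₀))
  exact h.cont.abs.exists_forall_ge' x₀ (hev.mono fun x hx => hx.le)

/-- The Bogomolny profile. -/
def gg (p ω s : ℝ) : ℝ := |s| * √(ω - (2 / p) * |s| ^ (p - 2))

/-- The primitive of `gg`. -/
def GG (p ω s : ℝ) : ℝ := ∫ r in (0:ℝ)..s, gg p ω r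

/-- The frequency attached to the maximum `d`. -/
def om (p d : ℝ) : ℝ := (2 / p) * d ^ (p - 2) + d ^ 4 / 4

lemma gg_cont {p : ℝ} (hp : 2 < p) (ω : ℝ) : Continuous (gg p ω) := by
  unfold gg
  have : Continuous fun s : ℝ => |s| ^ (p - 2) :=
    continuous_abs.rpow_const fun x => Or.inr (by linarith)
  fun_prop

lemma gg_nonneg (p ω s : ℝ) : 0 ≤ gg p ω s := by unfold gg; positivity

lemma GG_deriv {p : ℝ} (hp : 2 < p) (ω s : ℝ) : HasDerivAt (GG p ω) (gg p ω s) s :=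
  (gg_cont hp ω).integral_hasStrictDerivAt 0 s |>.hasDerivAt

lemma abs_rpow_eq {p : ℝ} (hp : 2 < p) (s : ℝ) : |s| ^ p = |s| ^ (p - 2) * s ^ 2 := by
  rcases eq_or_ne s 0 with rfl | hs
  · simp [Real.zero_rpow (show p ≠ 0 by linarith)]
  · rw [← sq_abs s, ← Real.rpow_natCast |s| 2, ← Real.rpow_add (abs_pos.2 hs)]
    norm_num

lemma gg_sq {p : ℝ} (hp : 2 < p) {ω s : ℝ} (h : (2 / p) * |s| ^ (p - 2) ≤ ω) :
    gg p ω s ^ 2 = ω * s ^ 2 - (2 / p) * |s| ^ p := by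
  unfold gg
  rw [mul_pow, sq_abs, Real.sq_sqrt (by linarith), abs_rpow_eq hp]
  ring

lemma NiceH1.int_p {u u' : ℝ → ℝ} (h : NiceH1 u u') {p ω : ℝ} (hp : 2 < p)
    (hb : ∀ x, (2 / p) * |u x| ^ (p - 2) ≤ ω) : Integrable (fun x => |u x| ^ p) := by
  refine (h.int_sq.const_mul (p / 2 * ω)).mono' ?_ ?_
  · exact (h.cont.abs.rpow_const fun x => Or.inr (by linarith)).aestronglyMeasurable
  · refine Eventually.of_forall fun x => ?_
    rw [Real.norm_eq_abs, abs_of_nonneg (by positivity), abs_rpow_eq hp]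
    gcongr
    have := hb x
    have hp0 : 0 < p := by linarith
    calc |u x| ^ (p - 2) = p / 2 * (2 / p * |u x| ^ (p - 2)) := by field_simp
      _ ≤ _ := by gcongr

lemma NiceH1.half {u u' : ℝ → ℝ} (h : NiceH1 u u') {p ω : ℝ} (hp : 2 < p)
    (hb : ∀ x, (2 / p) * |u x| ^ (p - 2) ≤ ω) :
    Integrable (fun x => (u' x + gg p ω (u x)) ^ 2) ∧
    (1 / 2) * (∫ x in Ioi 0, (u' x) ^ 2) - (1 / p) * (∫ x in Ioi 0, |u x| ^ p)
      + ω / 2 * (∫ x in Ioi 0, (u x) ^ 2)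
    = (1 / 2) * (∫ x in Ioi 0, (u' x + gg p ω (u x)) ^ 2) + GG p ω (u 0) := by
  have hip := h.int_p hp hb
  have hgc : Continuous fun x => gg p ω (u x) := (gg_cont hp ω).comp h.cont
  have hgs : ∀ x, gg p ω (u x) ^ 2 = ω * u x ^ 2 - (2 / p) * |u x| ^ p :=
    fun x => gg_sq hp (hb x)
  have hg2 : Integrable (fun x => gg p ω (u x) ^ 2) := by
    simp only [hgs]
    exact (h.int_sq.const_mul ω).sub (hip.const_mul (2 / p))
  have hgu : Integrable (fun x => gg p ω (u x) * u' x) := by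
    refine ((hg2.add h.int_dsq)).mono' (hgc.aestronglyMeasurable.mul h.aesm) ?_
    refine Eventually.of_forall fun x => ?_
    simp only [Real.norm_eq_abs, Pi.add_apply]
    rw [abs_le]
    constructor <;> nlinarith [sq_nonneg (gg p ω (u x) + u' x), sq_nonneg (gg p ω (u x) - u' x)]
  have hexp : ∀ x, (u' x + gg p ω (u x)) ^ 2 =
      u' x ^ 2 + ω * u x ^ 2 - (2 / p) * |u x| ^ p + 2 * (gg p ω (u x) * u' x) := by
    intro x
    have := hgs x
    linear_combination this
  have hcross : ∫ x in Ioi 0, gg p ω (u x) * u' x = - GG p ω (u 0) := by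
    have h1 := intervalIntegral_tendsto_integral_Ioi 0 hgu.integrableOn tendsto_id
    have hGc : Continuous (GG p ω) :=
      continuous_iff_continuousAt.2 fun s => (GG_deriv hp ω s).continuousAt
    have h2 : Tendsto (fun b => GG p ω (u b) - GG p ω (u 0)) atTop
        (𝓝 (GG p ω 0 - GG p ω (u 0))) :=
      ((hGc.tendsto 0).comp h.tendsto_top).sub_const _
    have h3 : GG p ω 0 = 0 := by simp [GG]
    rw [h3, zero_sub] at h2
    refine tendsto_nhds_unique h1 (h2.congr fun b => ?_)
    exact h.chain (gg_cont hp ω) (GG_deriv hp ω) 0 b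
  have i0 : Integrable (fun x => u' x ^ 2 + ω * u x ^ 2) :=
    h.int_dsq.add (h.int_sq.const_mul ω)
  have i1 : Integrable (fun x => u' x ^ 2 + ω * u x ^ 2 - (2 / p) * |u x| ^ p) :=
    (h.int_dsq.add (h.int_sq.const_mul ω)).sub (hip.const_mul (2 / p))
  constructor
  · simp only [hexp]
    exact i1.add (hgu.const_mul 2)
  · simp only [hexp]
    rw [integral_add i1.integrableOn (hgu.const_mul 2).integrableOn,
      integral_sub i0.integrableOn
        (hip.const_mul (2 / p)).integrableOn,
      integral_add h.int_dsq.integrableOn (h.int_sq.const_mul ω).integrableOn]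
    simp only [integral_const_mul, hcross]
    ring

lemma integral_split {f : ℝ → ℝ} (hf : Integrable f) :
    ∫ x, f x = (∫ x in Ioi 0, f x) + ∫ x in Ioi 0, f (-x) := by
  rw [integral_comp_neg_Ioi, neg_zero, add_comm]
  exact (intervalIntegral.integral_Iic_add_Ioi hf.integrableOn hf.integrableOn).symm

/-- The Bogomolny identity. -/
lemma NiceH1.bogo {u u' : ℝ → ℝ} (h : NiceH1 u u') {p ω : ℝ} (hp : 2 < p)
    (hb : ∀ x, (2 / p) * |u x| ^ (p - 2) ≤ ω) :
    Ffun p 4 u u' = (1 / 2) * (∫ x in Ioi 0, (u' x + gg p ω (u x)) ^ 2)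
      + (1 / 2) * (∫ x in Ioi 0, (- u' (-x) + gg p ω (u (-x))) ^ 2)
      + 2 * GG p ω (u 0) - ω * mass u / 2 - (u 0) ^ 4 / 4 := by
  have e1 := (h.half hp hb).2
  have e2 := (h.refl.half hp (fun x => hb (-x))).2
  unfold Ffun mass
  rw [integral_split h.int_sq, integral_split h.int_dsq, integral_split (h.int_p hp hb)]
  simp only [neg_sq, neg_zero] at e2
  have e3 : |u 0| ^ (4:ℝ) = u 0 ^ 4 := by
    rw [show (4:ℝ) = ((4:ℕ):ℝ) by norm_num, Real.rpow_natCast, Even.pow_abs (by decide)]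
  rw [e3]
  linear_combination e1 + e2

/-- The radicand in rescaled variables. -/
def Rf (p d t : ℝ) : ℝ := d ^ 4 / 4 + (2 / p) * d ^ (p - 2) * (1 - t ^ (p - 2))

/-- `GG p (om p d) d` in rescaled variables. -/
def KK (p d : ℝ) : ℝ := ∫ t in (0:ℝ)..1, d ^ 2 * t * √(Rf p d t)

/-- Half of the rescaled mass function. -/
def NN (p k : ℝ) : ℝ := ∫ t in (0:ℝ)..1, t / √(1 / 4 + k * (1 - t ^ (p - 2)))

/-- The reduced energy. -/
def Phi (p μ d : ℝ) : ℝ := 2 * GG p (om p d) d - om p d * μ / 2 - d ^ 4 / 4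

lemma one_sub_rpow_nonneg {p t : ℝ} (hp : 2 < p) (h0 : 0 ≤ t) (h1 : t ≤ 1) :
    0 ≤ 1 - t ^ (p - 2) := by
  have := Real.rpow_le_one h0 h1 (show 0 ≤ p - 2 by linarith)
  linarith

lemma Rf_ge {p d t : ℝ} (hp : 2 < p) (hd : 0 ≤ d) (h0 : 0 ≤ t) (h1 : t ≤ 1) :
    d ^ 4 / 4 ≤ Rf p d t := by
  have := one_sub_rpow_nonneg hp h0 h1
  have hp0 : 0 < p := by linarith
  unfold Rf
  have : 0 ≤ (2 / p) * d ^ (p - 2) * (1 - t ^ (p - 2)) := by positivity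
  linarith

lemma GG_eq_KK {p d : ℝ} (hd : 0 ≤ d) : GG p (om p d) d = KK p d := by
  unfold GG KK
  have := intervalIntegral.smul_integral_comp_mul_left (a := 0) (b := 1) (gg p (om p d)) d
  rw [mul_zero, mul_one] at this
  rw [← this, smul_eq_mul, ← intervalIntegral.integral_const_mul]
  apply intervalIntegral.integral_congr
  intro t ht
  rw [uIcc_of_le zero_le_one] at ht
  simp only [gg]
  rw [abs_of_nonneg (mul_nonneg hd ht.1), Real.mul_rpow hd ht.1]
  have : om p d - 2 / p * (d ^ (p - 2) * t ^ (p - 2)) = Rf p d t := by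
    unfold om Rf; ring
  rw [this]; ring

lemma Rf_cont {p : ℝ} (hp : 2 < p) : Continuous (fun z : ℝ × ℝ => Rf p z.1 z.2) := by
  unfold Rf
  have h1 : Continuous fun z : ℝ × ℝ => z.1 ^ (p - 2) :=
    continuous_fst.rpow_const fun x => Or.inr (by linarith)
  have h2 : Continuous fun z : ℝ × ℝ => z.2 ^ (p - 2) :=
    continuous_snd.rpow_const fun x => Or.inr (by linarith)
  fun_prop

lemma KK_cont {p : ℝ} (hp : 2 < p) : Continuous (KK p) := by
  unfold KK
  apply intervalIntegral.continuous_parametric_intervalIntegral_of_continuous'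
  have := Rf_cont hp
  simp only [Function.uncurry_def]
  fun_prop

/-- Derivative of the integrand of `KK`. -/
def KD (p d t : ℝ) : ℝ := 2 * d * t * √(Rf p d t) + d ^ 2 * t *
  ((d ^ 3 + (2 / p) * ((p - 2) * d ^ (p - 3)) * (1 - t ^ (p - 2))) / (2 * √(Rf p d t)))

lemma KD_hasDeriv {p d t : ℝ} (hp : 2 < p) (hd : 0 < d) (h0 : 0 ≤ t) (h1 : t ≤ 1) :
    HasDerivAt (fun x => x ^ 2 * t * √(Rf p x t)) (KD p d t) d := by
  have hR : 0 < Rf p d t := lt_of_lt_of_le (by positivity) (Rf_ge hp hd.le h0 h1)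
  have e1 : HasDerivAt (fun x => Rf p x t)
      (d ^ 3 + (2 / p) * ((p - 2) * d ^ (p - 3)) * (1 - t ^ (p - 2))) d := by
    unfold Rf
    have a1 := (hasDerivAt_pow 4 d).div_const 4
    have a2 := Real.hasDerivAt_rpow_const (x := d) (p := p - 2) (Or.inl hd.ne')
    have a3 := (a2.const_mul (2 / p)).mul_const (1 - t ^ (p - 2))
    convert! a1.add a3 using 1
    rw [show p - 2 - 1 = p - 3 by ring]
    norm_num
  have e2 := e1.sqrt hR.ne'
  have e3 := ((hasDerivAt_pow 2 d).mul_const t).mul e2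
  convert! e3 using 1
  unfold KD
  norm_num

lemma KD_contOn {p : ℝ} (hp : 2 < p) :
    ContinuousOn (fun z : ℝ × ℝ => KD p z.1 z.2) (Ioi 0 ×ˢ Icc 0 1) := by
  have hR : ContinuousOn (fun z : ℝ × ℝ => √(Rf p z.1 z.2)) (Ioi 0 ×ˢ Icc 0 1) :=
    (Rf_cont hp).sqrt.continuousOn
  have hne : ∀ z ∈ (Ioi (0:ℝ) ×ˢ Icc (0:ℝ) 1), 2 * √(Rf p z.1 z.2) ≠ 0 := by
    intro z hz
    have h1 : (0:ℝ) < z.1 := hz.1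
    have := lt_of_lt_of_le (show 0 < z.1 ^ 4 / 4 by positivity) (Rf_ge hp h1.le hz.2.1 hz.2.2)
    positivity
  have h1 : ContinuousOn (fun z : ℝ × ℝ => z.1 ^ (p - 3)) (Ioi 0 ×ˢ Icc 0 1) :=
    continuous_fst.continuousOn.rpow_const fun x hx => Or.inl (ne_of_gt hx.1)
  have h2 : ContinuousOn (fun z : ℝ × ℝ => z.2 ^ (p - 2)) (Ioi 0 ×ˢ Icc 0 1) :=
    continuous_snd.continuousOn.rpow_const fun x hx => Or.inr (by linarith)
  unfold KD
  fun_prop (disch := assumption)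

lemma NN_int {p d : ℝ} (hd : 0 < d) :
    ∫ t in (0:ℝ)..1, d ^ 2 * t / √(Rf p d t) = NN p (2 / p * d ^ (p - 6)) := by
  unfold NN
  apply intervalIntegral.integral_congr
  intro t ht
  simp only
  have : Rf p d t = (d ^ 2) ^ 2 * (1 / 4 + 2 / p * d ^ (p - 6) * (1 - t ^ (p - 2))) := by
    unfold Rf
    have : d ^ (p - 2) = (d ^ 2) ^ 2 * d ^ (p - 6) := by
      rw [← pow_mul, ← Real.rpow_natCast, ← Real.rpow_add hd]
      congr 1; push_cast; ring
    rw [this]; ring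
  rw [this, Real.sqrt_mul (by positivity), Real.sqrt_sq (by positivity)]
  have : d ≠ 0 := hd.ne'
  field_simp

lemma Rf_pos {p d t : ℝ} (hp : 2 < p) (hd : 0 < d) (h0 : 0 ≤ t) (h1 : t ≤ 1) : 0 < Rf p d t :=
  lt_of_lt_of_le (by positivity) (Rf_ge hp hd.le h0 h1)

lemma KD_integral {p d : ℝ} (hp : 2 < p) (hd : 0 < d) :
    ∫ t in (0:ℝ)..1, KD p d t = d ^ 3 / 2 +
      ((2 / p) * ((p - 2) * d ^ (p - 3)) + d ^ 3) / 2 * NN p (2 / p * d ^ (p - 6)) := by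
  rw [← NN_int hd]
  have hcR : Continuous (fun t => Rf p d t) := (Rf_cont hp).comp (by fun_prop : Continuous fun t : ℝ => (d, t))
  have hne : ∀ t ∈ Icc (0:ℝ) 1, √(Rf p d t) ≠ 0 := fun t ht =>
    (Real.sqrt_pos.2 (Rf_pos hp hd ht.1 ht.2)).ne'
  have hne2 : ∀ t ∈ Icc (0:ℝ) 1, 2 * √(Rf p d t) ≠ 0 := fun t ht =>
    mul_ne_zero two_ne_zero (hne t ht)
  have hsR : ContinuousOn (fun t => √(Rf p d t)) (Icc 0 1) := hcR.sqrt.continuousOn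
  have hpw : ContinuousOn (fun t : ℝ => t ^ (p - 1)) (Icc 0 1) :=
    continuousOn_id.rpow_const fun x hx => Or.inr (by linarith)
  set B : ℝ → ℝ := fun t => 2 * t * √(Rf p d t) +
    (-(2 / p) * (p - 2) * d ^ (p - 2)) * t ^ (p - 1) / (2 * √(Rf p d t)) with hB
  have hBc : ContinuousOn B (Icc 0 1) := by
    simp only [hB]; fun_prop (disch := assumption)
  have hBi : IntervalIntegrable B volume 0 1 := by
    apply ContinuousOn.intervalIntegrable; rwa [uIcc_of_le zero_le_one]
  have hNi : IntervalIntegrable (fun t => d ^ 2 * t / √(Rf p d t)) volume 0 1 := by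
    apply ContinuousOn.intervalIntegrable; rw [uIcc_of_le zero_le_one]
    fun_prop (disch := assumption)
  have hBint : ∫ t in (0:ℝ)..1, B t = d ^ 2 / 2 := by
    have := intervalIntegral.integral_eq_sub_of_hasDerivAt_of_le zero_le_one
      (f := fun t => t ^ 2 * √(Rf p d t)) (f' := B)
      (by fun_prop) ?_ hBi
    · rw [this]
      have : Rf p d 1 = (d ^ 2 / 2) ^ 2 := by unfold Rf; simp; ring
      rw [this, Real.sqrt_sq (by positivity)]
      ring
    · intro t ht
      have hRp := Rf_pos hp hd ht.1.le ht.2.le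
      have a1 : HasDerivAt (fun t => Rf p d t)
          (2 / p * d ^ (p - 2) * (-((p - 2) * t ^ (p - 2 - 1)))) t := by
        unfold Rf
        exact (((Real.hasDerivAt_rpow_const (Or.inl ht.1.ne')).const_sub 1).const_mul _).const_add _
      have a2 := (hasDerivAt_pow 2 t).mul (a1.sqrt hRp.ne')
      convert! a2 using 1
      simp only [hB]
      have : t ^ (p - 1) = t ^ 2 * t ^ (p - 2 - 1) := by
        rw [← Real.rpow_natCast t 2, ← Real.rpow_add ht.1]
        congr 1; push_cast; ring
      rw [this]
      norm_num
      ring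
  have hKD : ∫ t in (0:ℝ)..1, KD p d t = ∫ t in (0:ℝ)..1, (d * B t +
      ((2 / p) * ((p - 2) * d ^ (p - 3)) + d ^ 3) / 2 * (d ^ 2 * t / √(Rf p d t))) := by
    apply intervalIntegral.integral_congr
    intro t ht
    rw [uIcc_of_le zero_le_one] at ht
    simp only [hB, KD]
    have e1 : d ^ (p - 2) = d * d ^ (p - 3) := by
      rw [← Real.rpow_one_add' hd.le (by intro h; linarith)]
      congr 1; ring
    have e2 : t ^ (p - 1) = t * t ^ (p - 2) := by
      rw [← Real.rpow_one_add' ht.1 (by intro h; linarith)]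
      congr 1; ring
    rw [e1, e2]
    have := hne t ht
    field_simp
    ring
  rw [hKD, intervalIntegral.integral_add (hBi.const_mul d) (hNi.const_mul _),
    intervalIntegral.integral_const_mul, intervalIntegral.integral_const_mul, hBint]
  ring

lemma KK_deriv {p d : ℝ} (hp : 2 < p) (hd : 0 < d) :
    HasDerivAt (KK p) (∫ t in (0:ℝ)..1, KD p d t) d := by
  have hsub : Icc (d / 2) (2 * d) ×ˢ Icc (0:ℝ) 1 ⊆ Ioi 0 ×ˢ Icc 0 1 := by
    rintro ⟨x, t⟩ ⟨hx, ht⟩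
    exact ⟨lt_of_lt_of_le (by simpa using hd) hx.1, ht⟩
  obtain ⟨C, hC⟩ := (isCompact_Icc.prod isCompact_Icc).exists_bound_of_continuousOn
    ((KD_contOn hp).mono hsub)
  have hF : ∀ x, Continuous fun t => x ^ 2 * t * √(Rf p x t) := by
    intro x
    have := (Rf_cont hp).comp (by fun_prop : Continuous fun t : ℝ => (x, t))
    simp only [Function.comp_def] at this
    fun_prop
  unfold KK
  refine (intervalIntegral.hasDerivAt_integral_of_dominated_loc_of_deriv_le
    (F := fun x t => x ^ 2 * t * √(Rf p x t)) (F' := fun x t => KD p x t) (bound := fun _ => C)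
    (Icc_mem_nhds (show d / 2 < d by linarith) (show d < 2 * d by linarith)) ?_ ?_ ?_ ?_ ?_ ?_).2
  · exact Eventually.of_forall fun x => (hF x).aestronglyMeasurable
  · exact (hF d).intervalIntegrable 0 1
  · apply ContinuousOn.aestronglyMeasurable _ measurableSet_uIoc
    have : ContinuousOn (fun t => KD p d t) (Icc 0 1) :=
      (KD_contOn hp).comp (by fun_prop : ContinuousOn (fun t : ℝ => (d, t)) (Icc 0 1))
        (fun t ht => ⟨hd, ht⟩)
    rw [uIoc_of_le zero_le_one]
    exact this.mono Ioc_subset_Icc_self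
  · refine Eventually.of_forall fun t ht x hx => ?_
    rw [uIoc_of_le zero_le_one] at ht
    exact hC (x, t) ⟨hx, ht.1.le, ht.2⟩
  · exact intervalIntegrable_const
  · refine Eventually.of_forall fun t ht x hx => ?_
    rw [uIoc_of_le zero_le_one] at ht
    exact KD_hasDeriv hp (by linarith [hx.1]) ht.1.le ht.2

lemma Phi_deriv {p μ d : ℝ} (hp : 2 < p) (hd : 0 < d) :
    HasDerivAt (fun x => 2 * KK p x - om p x * μ / 2 - x ^ 4 / 4)
      (((2 / p) * ((p - 2) * d ^ (p - 3)) + d ^ 3) * (NN p (2 / p * d ^ (p - 6)) - μ / 2)) d := by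
  have h1 := (KK_deriv hp hd).const_mul 2
  rw [KD_integral hp hd] at h1
  have h2 : HasDerivAt (om p) ((2 / p) * ((p - 2) * d ^ (p - 3)) + d ^ 3) d := by
    unfold om
    have a1 := (hasDerivAt_pow 4 d).div_const 4
    have a2 := Real.hasDerivAt_rpow_const (x := d) (p := p - 2) (Or.inl hd.ne')
    convert! (a2.const_mul (2 / p)).add a1 using 1
    rw [show p - 2 - 1 = p - 3 by ring]
    norm_num
  have h3 := (hasDerivAt_pow 4 d).div_const 4
  convert! (h1.sub ((h2.mul_const μ).div_const 2)).sub h3 using 1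
  norm_num
  ring

lemma NN_cont {p : ℝ} (hp : 2 < p) : ContinuousOn (NN p) (Ici 0) := by
  have h1 : Continuous (fun k => ∫ t in (0:ℝ)..1,
      t / √(max (1 / 4) (1 / 4 + k * (1 - t ^ (p - 2))))) := by
    apply intervalIntegral.continuous_parametric_intervalIntegral_of_continuous'
    simp only [Function.uncurry_def]
    have h2 : Continuous fun z : ℝ × ℝ => z.2 ^ (p - 2) :=
      continuous_snd.rpow_const fun x => Or.inr (by linarith)
    refine Continuous.div₀ (by fun_prop) (by fun_prop) fun z => ?_
    have : (0:ℝ) < max (1 / 4) (1 / 4 + z.1 * (1 - z.2 ^ (p - 2))) :=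
      lt_of_lt_of_le (by norm_num) (le_max_left _ _)
    positivity
  refine h1.continuousOn.congr ?_
  intro k hk
  have hk' : (0:ℝ) ≤ k := hk
  apply intervalIntegral.integral_congr
  intro t ht
  rw [uIcc_of_le zero_le_one] at ht
  have := one_sub_rpow_nonneg hp ht.1 ht.2
  simp only
  rw [max_eq_right]
  have : 0 ≤ k * (1 - t ^ (p - 2)) := by positivity
  linarith

lemma NN_integrand_cont {p k : ℝ} (hp : 2 < p) (hk : 0 ≤ k) :
    ContinuousOn (fun t : ℝ => t / √(1 / 4 + k * (1 - t ^ (p - 2)))) (Icc 0 1) := by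
  have h2 : ContinuousOn (fun z : ℝ => z ^ (p - 2)) (Icc 0 1) :=
    continuousOn_id.rpow_const fun x _ => Or.inr (by linarith)
  refine ContinuousOn.div₀ (by fun_prop) (by fun_prop) fun t ht => ?_
  have := one_sub_rpow_nonneg hp ht.1 ht.2
  positivity

lemma NN_anti {p : ℝ} (hp : 2 < p) : StrictAntiOn (NN p) (Ici 0) := by
  intro k hk l hl hkl
  have hk' : (0:ℝ) ≤ k := hk
  have hl' : (0:ℝ) ≤ l := hl
  unfold NN
  apply intervalIntegral.integral_lt_integral_of_continuousOn_of_le_of_exists_lt zero_lt_one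
    (NN_integrand_cont hp hl') (NN_integrand_cont hp hk')
  · intro t ht
    have := one_sub_rpow_nonneg hp ht.1.le ht.2
    have h0 : 0 ≤ t := ht.1.le
    gcongr
  · refine ⟨1 / 2, by constructor <;> norm_num, ?_⟩
    have h3 : ((1:ℝ) / 2) ^ (p - 2) < 1 :=
      Real.rpow_lt_one (by norm_num) (by norm_num) (by linarith)
    have h4 : 0 < 1 - ((1:ℝ) / 2) ^ (p - 2) := by linarith
    have h5 : 0 < 1 / 4 + k * (1 - ((1:ℝ) / 2) ^ (p - 2)) := by positivity
    gcongr

lemma NN_zero (p : ℝ) : NN p 0 = 1 := by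
  unfold NN
  have : √((1:ℝ) / 4) = 1 / 2 := by
    rw [show (1:ℝ) / 4 = (1 / 2) ^ 2 by norm_num, Real.sqrt_sq (by norm_num)]
  simp only [zero_mul, add_zero, this]
  rw [intervalIntegral.integral_div, integral_id]
  norm_num

lemma NN_tendsto {p : ℝ} (hp : 2 < p) : Tendsto (NN p) atTop (𝓝 0) := by
  have h0 : (0:ℝ) = ∫ t in (0:ℝ)..1, (0:ℝ) := by simp
  rw [h0]
  unfold NN
  apply intervalIntegral.tendsto_integral_filter_of_dominated_convergence (fun _ => 2)
  · filter_upwards [eventually_ge_atTop 0] with k hk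
    rw [uIoc_of_le zero_le_one]
    exact ((NN_integrand_cont hp hk).mono Ioc_subset_Icc_self).aestronglyMeasurable
      measurableSet_Ioc
  · filter_upwards [eventually_ge_atTop 0] with k hk
    refine Eventually.of_forall fun t ht => ?_
    rw [uIoc_of_le zero_le_one] at ht
    have h1 := one_sub_rpow_nonneg hp ht.1.le ht.2
    have ht0 : 0 ≤ t := ht.1.le
    rw [Real.norm_eq_abs, abs_of_nonneg (by positivity)]
    have h2 : (1:ℝ) / 2 ≤ √(1 / 4 + k * (1 - t ^ (p - 2))) := by
      apply Real.le_sqrt_of_sq_le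
      have : 0 ≤ k * (1 - t ^ (p - 2)) := by positivity
      linarith
    rw [div_le_iff₀ (by linarith)]
    linarith [ht.2]
  · exact intervalIntegrable_const
  · have : ∀ᵐ t : ℝ, t ≠ 1 := by simp [ae_iff]
    filter_upwards [this] with t ht1 ht
    rw [uIoc_of_le zero_le_one] at ht
    have h3 : t ^ (p - 2) < 1 :=
      Real.rpow_lt_one ht.1.le (lt_of_le_of_ne ht.2 ht1) (by linarith)
    apply Tendsto.div_atTop tendsto_const_nhds
    apply Real.tendsto_sqrt_atTop.comp
    apply tendsto_atTop_add_const_left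
    exact tendsto_id.atTop_mul_const (by linarith)

lemma exists_c {p μ : ℝ} (hp : 2 < p) (hp' : p < 6) (hμ : 0 < μ) (hμ' : μ < 2) :
    ∃ c > 0, NN p (2 / p * c ^ (p - 6)) = μ / 2 := by
  have hev := (NN_tendsto hp).eventually (gt_mem_nhds (show 0 < μ / 2 by linarith))
  obtain ⟨K, hK, hK0⟩ := (hev.and (eventually_ge_atTop 0)).exists
  have := intermediate_value_Icc' hK0 ((NN_cont hp).mono Icc_subset_Ici_self)
  obtain ⟨k, hk, hk2⟩ := this (show μ / 2 ∈ Icc (NN p K) (NN p 0) from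
    ⟨hK.le, by rw [NN_zero]; linarith⟩)
  have hk0 : 0 < k := by
    rcases hk.1.lt_or_eq with h | h
    · exact h
    · rw [← h, NN_zero] at hk2; linarith
  have hp0 : 0 < p := by linarith
  refine ⟨(p / 2 * k) ^ (1 / (p - 6)), by positivity, ?_⟩
  rw [← Real.rpow_mul (by positivity), one_div, inv_mul_cancel₀ (by linarith), Real.rpow_one, ← hk2]
  congr 1
  field_simp

lemma Phi_min {p μ c : ℝ} (hp : 2 < p) (hp' : p < 6) (hc : 0 < c)
    (hN : NN p (2 / p * c ^ (p - 6)) = μ / 2) :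
    Phi p μ c < 0 ∧ ∀ d, 0 ≤ d → d ≠ c → Phi p μ c < Phi p μ d := by
  have hp0 : 0 < p := by linarith
  set f : ℝ → ℝ := fun x => 2 * KK p x - om p x * μ / 2 - x ^ 4 / 4 with hf
  have hPf : ∀ d, 0 ≤ d → Phi p μ d = f d := by
    intro d hd; simp only [Phi, hf, GG_eq_KK hd]
  have hfc : Continuous f := by
    have := KK_cont hp
    have h2 : Continuous (om p) := by
      unfold om
      have : Continuous fun z : ℝ => z ^ (p - 2) :=
        continuous_id.rpow_const fun x => Or.inr (by linarith)
      fun_prop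
    simp only [hf]; fun_prop
  have hdom : ∀ d, 0 < d → 0 < (2 / p) * ((p - 2) * d ^ (p - 3)) + d ^ 3 := by
    intro d hd
    have : 0 < p - 2 := by linarith
    positivity
  have hanti : StrictAntiOn f (Icc 0 c) := by
    apply strictAntiOn_of_deriv_neg (convex_Icc 0 c) hfc.continuousOn
    intro d hd
    rw [interior_Icc] at hd
    rw [(Phi_deriv hp hd.1).deriv]
    apply mul_neg_of_pos_of_neg (hdom d hd.1)
    rw [← hN, sub_neg]
    have : c ^ (p - 6) < d ^ (p - 6) := Real.rpow_lt_rpow_of_neg hd.1 hd.2 (by linarith)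
    have hd0 := hd.1
    apply NN_anti hp
    · exact mem_Ici.2 (by positivity)
    · exact mem_Ici.2 (by positivity)
    · gcongr
  have hmono : StrictMonoOn f (Ici c) := by
    apply strictMonoOn_of_deriv_pos (convex_Ici c) hfc.continuousOn
    intro d hd
    rw [interior_Ici] at hd
    have hcd : c < d := hd
    have hd0 : 0 < d := hc.trans hcd
    rw [(Phi_deriv hp hd0).deriv]
    apply mul_pos (hdom d hd0)
    rw [← hN, sub_pos]
    have : d ^ (p - 6) < c ^ (p - 6) := Real.rpow_lt_rpow_of_neg hc hcd (by linarith)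
    apply NN_anti hp
    · exact mem_Ici.2 (by positivity)
    · exact mem_Ici.2 (by positivity)
    · gcongr
  have hf0 : f 0 = 0 := by
    simp [hf, KK, om, Real.zero_rpow (show p - 2 ≠ 0 by linarith)]
  constructor
  · rw [hPf c hc.le, ← hf0]
    exact hanti ⟨le_rfl, hc.le⟩ ⟨hc.le, le_rfl⟩ hc
  · intro d hd hne
    rw [hPf c hc.le, hPf d hd]
    rcases lt_or_gt_of_ne hne with h | h
    · exact hanti ⟨hd, h.le⟩ ⟨hc.le, le_rfl⟩ h
    · exact hmono (mem_Ici.2 le_rfl) (mem_Ici.2 h.le) h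

lemma exists_profile {p c : ℝ} (hp : 2 < p) (hc : 0 < c) :
    ∃ f : ℝ → ℝ, f 0 = c ∧ (∀ x, 0 ≤ x → 0 < f x ∧ f x ≤ c) ∧
      (∀ x, 0 ≤ x → HasDerivAt f (- gg p (om p c) (f x)) x) ∧ Tendsto f atTop (𝓝 0) := by
  have hp0 : 0 < p := by linarith
  have hp2 : 0 < p - 2 := by linarith
  set ω := om p c with hω
  have hω0 : 0 < ω := by rw [hω]; unfold om; positivity
  have hωc : c ^ (p - 2) < p * ω / 2 := by
    rw [hω]; unfold om
    have : p * (2 / p * c ^ (p - 2) + c ^ 4 / 4) / 2 = c ^ (p - 2) + p * c ^ 4 / 8 := by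
      field_simp
      ring
    rw [this]
    have : 0 < p * c ^ 4 / 8 := by positivity
    linarith
  set Q := p * ω / 2 with hQ
  have hQ0 : 0 < Q := by positivity
  set C := √(Q / c ^ (p - 2)) with hC
  have hcp : 0 < c ^ (p - 2) := by positivity
  have hC1 : 1 ≤ C := by
    rw [hC]; apply Real.le_sqrt_of_sq_le; rw [one_pow, le_div_iff₀ hcp]; linarith
  have hC2 : C ^ 2 = Q / c ^ (p - 2) := Real.sq_sqrt (by positivity)
  set y := Real.arcosh C with hy
  have hy0 : 0 ≤ y := Real.arcosh_nonneg hC1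
  have hcy : Real.cosh y = C := Real.cosh_arcosh hC1
  set k := (p - 2) / 2 * √ω with hk
  have hk0 : 0 < k := by positivity
  set f : ℝ → ℝ := fun x => (Q / Real.cosh (k * x + y) ^ 2) ^ (1 / (p - 2)) with hf
  have hpos : ∀ x, 0 < f x := by
    intro x
    have := Real.cosh_pos (k * x + y)
    simp only [hf]; positivity
  have hfp : ∀ x, f x ^ (p - 2) = Q / Real.cosh (k * x + y) ^ 2 := by
    intro x
    have := Real.cosh_pos (k * x + y)
    simp only [hf]
    rw [← Real.rpow_mul (by positivity), one_div, inv_mul_cancel₀ hp2.ne', Real.rpow_one]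
  have hf0 : f 0 = c := by
    simp only [hf, mul_zero, zero_add, hcy, hC2]
    rw [div_div_cancel₀ hQ0.ne', ← Real.rpow_mul hc.le, one_div, mul_inv_cancel₀ hp2.ne',
      Real.rpow_one]
  have hle : ∀ x, 0 ≤ x → f x ≤ c := by
    intro x hx
    rw [← hf0]
    simp only [hf]
    have h1 : Real.cosh (k * 0 + y) ≤ Real.cosh (k * x + y) := by
      rw [Real.cosh_le_cosh, abs_of_nonneg (by positivity), abs_of_nonneg (by positivity)]
      gcongr
    have := Real.cosh_pos (k * 0 + y)
    gcongr
  refine ⟨f, hf0, fun x hx => ⟨hpos x, hle x hx⟩, ?_, ?_⟩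
  · intro x hx
    have hch := Real.cosh_pos (k * x + y)
    have hsh : 0 ≤ Real.sinh (k * x + y) := Real.sinh_nonneg_iff.2 (by positivity)
    have hgg : gg p ω (f x) = f x * (√ω * (Real.sinh (k * x + y) / Real.cosh (k * x + y))) := by
      unfold gg
      rw [abs_of_pos (hpos x), hfp x]
      congr 1
      have : ω - 2 / p * (Q / Real.cosh (k * x + y) ^ 2) =
          ω * (Real.sinh (k * x + y) / Real.cosh (k * x + y)) ^ 2 := by
        rw [hQ, div_pow, Real.sinh_sq]
        field_simp
      rw [this, Real.sqrt_mul hω0.le, Real.sqrt_sq (by positivity)]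
    rw [hgg]
    have d1 : HasDerivAt (fun x => k * x + y) k x := by
      simpa using ((hasDerivAt_id x).const_mul k).add_const y
    have d2 := ((d1.cosh.pow 2).inv (pow_ne_zero 2 hch.ne')).const_mul Q
    have d3 := d2.rpow_const (p := 1 / (p - 2)) 
      (Or.inl (mul_pos hQ0 (inv_pos.2 (pow_pos hch 2))).ne')
    have hfe : f = fun x => (Q * (Real.cosh (k * x + y) ^ 2)⁻¹) ^ (1 / (p - 2)) := by
      ext z; simp only [hf, div_eq_mul_inv]
    rw [hfe]
    convert! d3 using 1
    simp only [Pi.pow_apply, Pi.inv_apply]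
    have hB : 0 < Q * (Real.cosh (k * x + y) ^ 2)⁻¹ := by positivity
    rw [Real.rpow_sub_one hB.ne']
    rw [hk]
    norm_num
    field_simp
  · have hcosh : Tendsto (fun x => Real.cosh (k * x + y)) atTop atTop := by
      have h1 : Tendsto (fun x => k * x + y) atTop atTop :=
        tendsto_atTop_add_const_right _ _ (tendsto_id.const_mul_atTop hk0)
      refine tendsto_atTop_mono (fun x => ?_) h1
      have := Real.cosh_sq (k * x + y)
      have hh := Real.sinh_sq (k * x + y)
      rcases le_total (k * x + y) 0 with h | h
      · exact h.trans (Real.cosh_pos _).le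
      · exact (Real.self_le_sinh_iff.2 h).trans (Real.sinh_lt_cosh _).le
    have h2 : Tendsto (fun x => Q / Real.cosh (k * x + y) ^ 2) atTop (𝓝 0) :=
      tendsto_const_nhds.div_atTop ((tendsto_pow_atTop two_ne_zero).comp hcosh)
    have h3 := h2.rpow_const (p := 1 / (p - 2)) (Or.inr (by positivity))
    rwa [Real.zero_rpow (by positivity)] at h3

lemma integrable_even {F : ℝ → ℝ} (h : IntegrableOn F (Ioi 0)) : Integrable (fun x => F |x|) := by
  have h1 : IntegrableOn (fun x => F |x|) (Ioi 0) :=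
    h.congr_fun (fun x hx => by rw [abs_of_pos hx]) measurableSet_Ioi
  have h3 : IntegrableOn (fun x ↦ F |x|) (Iic 0) := by
    rw [← Measure.map_neg_eq_self (volume : Measure ℝ)]
    let m : MeasurableEmbedding fun x : ℝ => -x := (Homeomorph.neg ℝ).measurableEmbedding
    rw [m.integrableOn_map_iff]
    simp_rw [Function.comp_def, abs_neg, neg_preimage, neg_Iic, neg_zero]
    exact Iff.mpr integrableOn_Ici_iff_integrableOn_Ioi h1
  rw [← integrableOn_univ, ← Iic_union_Ioi (a := (0:ℝ))]
  exact h3.union h1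

lemma om_bound {p d s : ℝ} (hp : 2 < p) (hs : |s| ≤ d) :
    (2 / p) * |s| ^ (p - 2) ≤ om p d := by
  unfold om
  have hp0 : 0 < p := by linarith
  have h1 : |s| ^ (p - 2) ≤ d ^ (p - 2) := Real.rpow_le_rpow (abs_nonneg s) hs (by linarith)
  have h2 : 0 ≤ d ^ 4 / 4 := by positivity
  have h3 : (2 / p) * |s| ^ (p - 2) ≤ (2 / p) * d ^ (p - 2) := by gcongr
  linarith

lemma profile_mass {p c : ℝ} (hp : 2 < p) (hc : 0 < c) {f : ℝ → ℝ} (hf0 : f 0 = c)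
    (hfr : ∀ x, 0 ≤ x → 0 < f x ∧ f x ≤ c)
    (hfd : ∀ x, 0 ≤ x → HasDerivAt f (- gg p (om p c) (f x)) x) (hft : Tendsto f atTop (𝓝 0)) :
    IntegrableOn (fun x => f x ^ 2) (Ioi 0) ∧
    ∫ x in Ioi 0, f x ^ 2 = NN p (2 / p * c ^ (p - 6)) := by
  have hp0 : 0 < p := by linarith
  set r : ℝ → ℝ := fun s => s / √(max (c ^ 4 / 4) (om p c - (2 / p) * |s| ^ (p - 2))) with hr
  have hrc : Continuous r := by
    have h2 : Continuous fun s : ℝ => |s| ^ (p - 2) :=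
      continuous_abs.rpow_const fun x => Or.inr (by linarith)
    refine Continuous.div₀ (by fun_prop) (by fun_prop) fun z => ?_
    have : (0:ℝ) < max (c ^ 4 / 4) (om p c - (2 / p) * |z| ^ (p - 2)) :=
      lt_of_lt_of_le (by positivity) (le_max_left _ _)
    positivity
  have hmax : ∀ s, 0 ≤ s → s ≤ c → c ^ 4 / 4 ≤ om p c - (2 / p) * |s| ^ (p - 2) := by
    intro s h0 h1
    unfold om
    rw [abs_of_nonneg h0]
    have h1 : s ^ (p - 2) ≤ c ^ (p - 2) := Real.rpow_le_rpow h0 h1 (by linarith)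
    have h3 : (2 / p) * s ^ (p - 2) ≤ (2 / p) * c ^ (p - 2) := by gcongr
    linarith
  set H : ℝ → ℝ := fun s => ∫ t in (0:ℝ)..s, r t with hH
  have hHd : ∀ s, HasDerivAt H (r s) s := fun s =>
    (hrc.integral_hasStrictDerivAt 0 s).hasDerivAt
  have hd : ∀ x ∈ Ici (0:ℝ), HasDerivAt (fun x => - H (f x)) (f x ^ 2) x := by
    intro x hx
    have hx' : (0:ℝ) ≤ x := hx
    have h1 := ((hHd (f x)).comp x (hfd x hx')).neg
    convert! h1 using 1
    obtain ⟨a1, a2⟩ := hfr x hx'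
    have a3 := hmax (f x) a1.le a2
    have a4 : 0 < om p c - (2 / p) * |f x| ^ (p - 2) :=
      lt_of_lt_of_le (by positivity) a3
    have a5 := Real.sqrt_pos.2 a4
    simp only [hr, gg]
    rw [max_eq_right a3]
    rw [abs_of_pos a1] at *
    generalize √(om p c - 2 / p * f x ^ (p - 2)) = y at *
    field_simp
  have hlim : Tendsto (fun x => - H (f x)) atTop (𝓝 0) := by
    have h1 := (((hHd 0).continuousAt.tendsto).comp hft).neg
    have h2 : H 0 = 0 := by simp [hH]
    rw [h2, neg_zero] at h1
    exact h1
  refine ⟨integrableOn_Ioi_deriv_of_nonneg' hd (fun x _ => sq_nonneg _) hlim, ?_⟩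
  rw [integral_Ioi_of_hasDerivAt_of_nonneg' hd (fun x _ => sq_nonneg _) hlim, hf0, ← NN_int hc]
  simp only [sub_neg_eq_add, zero_add, hH]
  have := intervalIntegral.smul_integral_comp_mul_left (a := 0) (b := 1) r c
  rw [mul_zero, mul_one] at this
  rw [← this, smul_eq_mul, ← intervalIntegral.integral_const_mul]
  apply intervalIntegral.integral_congr
  intro t ht
  rw [uIcc_of_le zero_le_one] at ht
  have ht0 := ht.1
  have e0 : 0 ≤ c * t := by positivity
  have e1 := hmax (c * t) e0 (by nlinarith [ht.2])
  simp only [hr]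
  rw [max_eq_right e1, abs_of_nonneg e0, Real.mul_rpow hc.le ht.1]
  have : om p c - 2 / p * (c ^ (p - 2) * t ^ (p - 2)) = Rf p c t := by
    unfold om Rf; ring
  rw [this]; ring

lemma exists_gs {p c : ℝ} (hp : 2 < p) (hc : 0 < c) :
    ∃ u u' : ℝ → ℝ, NiceH1 u u' ∧ mass u = 2 * NN p (2 / p * c ^ (p - 6)) ∧
      Ffun p 4 u u' = 2 * GG p (om p c) c - om p c * mass u / 2 - c ^ 4 / 4 := by
  obtain ⟨f, hf0, hfr, hfd, hft⟩ := exists_profile hp hc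
  obtain ⟨hi, hm⟩ := profile_mass hp hc hf0 hfr hfd hft
  set ω := om p c with hω
  have hcu : Continuous fun x => f |x| := by
    have : ContinuousOn f (Ici 0) := fun x hx => (hfd x hx).continuousAt.continuousWithinAt
    exact this.comp_continuous continuous_abs fun x => abs_nonneg x
  have hcg : Continuous fun x => gg p ω (f |x|) := (gg_cont hp ω).comp hcu
  have hb : ∀ x, (2 / p) * |f (|x|)| ^ (p - 2) ≤ ω := by
    intro x
    apply om_bound hp
    obtain ⟨a, b⟩ := hfr |x| (abs_nonneg x)
    rwa [abs_of_pos a]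
  have hi2 : Integrable (fun x => f |x| ^ 2) := integrable_even (F := fun x => f x ^ 2) hi
  have hloc : ∀ a b, IntervalIntegrable (fun x => if 0 < x then - gg p ω (f |x|) else gg p ω (f |x|))
      volume a b := by
    intro a b
    refine (hcg.intervalIntegrable a b).mono_fun ?_ ?_
    · refine Measurable.aestronglyMeasurable ?_
      exact Measurable.ite measurableSet_Ioi hcg.measurable.neg hcg.measurable
    · refine Eventually.of_forall fun x => ?_
      simp only
      split_ifs <;> simp
  have hN : NiceH1 (fun x => f |x|)
      (fun x => if 0 < x then - gg p ω (f |x|) else gg p ω (f |x|)) := by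
    refine ⟨hcu, hi2, ?_, hloc, ?_⟩
    · have : (fun x => (if 0 < x then - gg p ω (f |x|) else gg p ω (f |x|)) ^ 2) =
          fun x => gg p ω (f |x|) ^ 2 := by
        ext x; split_ifs <;> simp
      rw [this]
      refine (hi2.const_mul ω).mono' (hcg.pow 2).aestronglyMeasurable ?_
      refine Eventually.of_forall fun x => ?_
      rw [Real.norm_eq_abs, abs_of_nonneg (sq_nonneg _), gg_sq hp (hb x)]
      have : 0 ≤ 2 / p * |f (|x|)| ^ p := by
        have : 0 < p := by linarith
        positivity
      linarith
    · intro a b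
      rw [MeasureTheory.integral_eq_of_hasDerivAt_off_countable (fun x => f |x|) _
        (countable_singleton (0:ℝ)) hcu.continuousOn _ (hloc a b)]
      rintro x ⟨-, hx⟩
      have hx0 : x ≠ 0 := hx
      rcases lt_or_gt_of_ne hx0 with h | h
      · have hd := hfd (-x) (by linarith)
        have h1 := hd.comp x (hasDerivAt_neg x)
        rw [if_neg (by linarith), abs_of_neg h]
        refine HasDerivAt.congr_of_eventuallyEq (f := f ∘ Neg.neg) (by convert! h1 using 1; ring) ?_
        filter_upwards [gt_mem_nhds h] with z hz
        simp [abs_of_neg hz]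
      · rw [if_pos h, abs_of_pos h]
        refine (hfd x h.le).congr_of_eventuallyEq ?_
        filter_upwards [lt_mem_nhds h] with z hz
        rw [abs_of_pos hz]
  refine ⟨_, _, hN, ?_, ?_⟩
  · unfold mass
    rw [integral_comp_abs (f := fun x => f x ^ 2), hm]
  · rw [hN.bogo hp hb]
    have z1 : ∫ x in Ioi (0:ℝ), ((if 0 < x then - gg p ω (f |x|) else gg p ω (f |x|)) +
        gg p ω (f |x|)) ^ 2 = 0 := by
      rw [setIntegral_congr_fun measurableSet_Ioi (g := fun _ => (0:ℝ))]
      · simp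
      · intro x hx
        have hx' : (0:ℝ) < x := hx
        simp [hx']
    have z2 : ∫ x in Ioi (0:ℝ), (-(if 0 < -x then - gg p ω (f |-x|) else gg p ω (f |-x|)) +
        gg p ω (f |-x|)) ^ 2 = 0 := by
      rw [setIntegral_congr_fun measurableSet_Ioi (g := fun _ => (0:ℝ))]
      · simp
      · intro x hx
        have hx' : (0:ℝ) < x := hx
        have : ¬ (0 < -x) := by linarith
        simp [this]
    rw [z1, z2]
    simp only [abs_zero, hf0]
    ring

lemma gg_lip {p c : ℝ} (hp : 2 < p) (hc : 0 < c) :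
    ∃ K, LipschitzOnWith K (gg p (om p c)) (Icc 0 c) := by
  have hp0 : 0 < p := by linarith
  set K : ℝ := √(om p c) + c ^ (p - 2) / √(c ^ 4 / 4) with hK
  have hK0 : 0 ≤ K := by positivity
  refine ⟨K.toNNReal, ?_⟩
  rw [← closure_Ioo hc.ne]
  refine LipschitzOnWith.closure (gg_cont hp _).continuousOn ?_
  have hd : ∀ s ∈ Ioo 0 c, HasDerivWithinAt (gg p (om p c))
      (√(om p c - 2 / p * s ^ (p - 2)) -
        ((p - 2) / p) * s ^ (p - 2) / √(om p c - 2 / p * s ^ (p - 2))) (Ioo 0 c) s := by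
    intro s hs
    have hs0 : 0 < s := hs.1
    have hR : c ^ 4 / 4 ≤ om p c - 2 / p * s ^ (p - 2) := by
      have h1 : s ^ (p - 2) ≤ c ^ (p - 2) := Real.rpow_le_rpow hs.1.le hs.2.le (by linarith)
      have : (2 / p) * s ^ (p - 2) ≤ (2 / p) * c ^ (p - 2) := by gcongr
      unfold om; linarith
    have hR0 : 0 < om p c - 2 / p * s ^ (p - 2) := lt_of_lt_of_le (by positivity) hR
    have h1 : HasDerivAt (fun s : ℝ => s ^ (p - 2)) ((p - 2) * s ^ (p - 2 - 1)) s :=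
      Real.hasDerivAt_rpow_const (Or.inl hs0.ne')
    have h2 := ((h1.const_mul (2 / p)).const_sub (om p c)).sqrt hR0.ne'
    have h3 := (hasDerivAt_id s).mul h2
    have h4 := h3.congr_of_eventuallyEq (f₁ := gg p (om p c)) (by
      filter_upwards [lt_mem_nhds hs0] with z hz
      simp [gg, abs_of_pos hz])
    refine (HasDerivAt.congr_deriv h4 ?_).hasDerivWithinAt
    have e : s ^ (p - 2) = s ^ (p - 2 - 1) * s := by
      rw [Real.rpow_sub_one hs0.ne']; field_simp
    have hy := Real.sqrt_pos.2 hR0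
    simp only [id]
    generalize √(om p c - 2 / p * s ^ (p - 2)) = y at *
    rw [e]
    field_simp
    ring
  refine Convex.lipschitzOnWith_of_nnnorm_hasDerivWithin_le (convex_Ioo 0 c) hd ?_
  intro s hs
  have hs0 : 0 < s := hs.1
  have h1 : s ^ (p - 2) ≤ c ^ (p - 2) := Real.rpow_le_rpow hs.1.le hs.2.le (by linarith)
  have hR : c ^ 4 / 4 ≤ om p c - 2 / p * s ^ (p - 2) := by
    have : (2 / p) * s ^ (p - 2) ≤ (2 / p) * c ^ (p - 2) := by gcongr
    unfold om; linarith
  rw [← NNReal.coe_le_coe, coe_nnnorm, Real.coe_toNNReal _ hK0]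
  refine (norm_sub_le _ _).trans ?_
  have hs2 : 0 < s ^ (p - 2) := by positivity
  have hp2 : 0 < p - 2 := by linarith
  rw [Real.norm_of_nonneg (Real.sqrt_nonneg _), Real.norm_of_nonneg (by positivity)]
  apply add_le_add
  · apply Real.sqrt_le_sqrt
    have : 0 < 2 / p * s ^ (p - 2) := by positivity
    linarith
  · have h5 : (p - 2) / p * s ^ (p - 2) ≤ c ^ (p - 2) := by
      have : (p - 2) / p ≤ 1 := by rw [div_le_one hp0]; linarith
      nlinarith
    have h6 := Real.sqrt_le_sqrt hR
    have h7 : 0 < √(c ^ 4 / 4) := Real.sqrt_pos.2 (by positivity)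
    gcongr

lemma abs_rpow_four (s : ℝ) : |s| ^ (4:ℝ) = s ^ 4 := by
  rw [show (4:ℝ) = ((4:ℕ):ℝ) by norm_num, Real.rpow_natCast, Even.pow_abs (by decide)]

lemma Ffun_trans (p z : ℝ) (u u' : ℝ → ℝ) :
    Ffun p 4 u u' = Ffun p 4 (fun x => u (x + z)) (fun x => u' (x + z))
      + (u z ^ 4 - u 0 ^ 4) / 4 := by
  unfold Ffun
  rw [integral_add_right_eq_self (fun x => u' x ^ 2) z,
    integral_add_right_eq_self (fun x => |u x| ^ p) z]
  simp only [abs_rpow_four, zero_add]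
  ring

lemma mass_trans (z : ℝ) (u : ℝ → ℝ) : mass (fun x => u (x + z)) = mass u := by
  unfold mass
  exact integral_add_right_eq_self (fun x => u x ^ 2) z

lemma NiceH1.lower0 {u u' : ℝ → ℝ} (h : NiceH1 u u') {p : ℝ} (hp : 2 < p) {d : ℝ}
    (hd : u 0 = d) (hb : ∀ x, |u x| ≤ d) : Phi p (mass u) d ≤ Ffun p 4 u u' := by
  rw [h.bogo hp (ω := om p d) (fun x => om_bound hp (hb x)), hd]
  have h1 : 0 ≤ ∫ x in Ioi 0, (u' x + gg p (om p d) (u x)) ^ 2 :=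
    integral_nonneg fun x => sq_nonneg _
  have h2 : 0 ≤ ∫ x in Ioi 0, (- u' (-x) + gg p (om p d) (u (-x))) ^ 2 :=
    integral_nonneg fun x => sq_nonneg _
  unfold Phi
  linarith

lemma NiceH1.lower {u u' : ℝ → ℝ} (h : NiceH1 u u') {p : ℝ} (hp : 2 < p) {z : ℝ}
    (hz : ∀ x, |u x| ≤ |u z|) :
    Phi p (mass u) |u z| + (u z ^ 4 - u 0 ^ 4) / 4 ≤ Ffun p 4 u u' := by
  rw [Ffun_trans p z]
  gcongr
  rcases le_total 0 (u z) with h0 | h0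
  · rw [← mass_trans z u]
    exact (h.trans z).lower0 hp (by simp [abs_of_nonneg h0]) fun x => hz _
  · have := (h.trans z).neg.lower0 hp (d := |u z|) (by simp [abs_of_nonpos h0])
      fun x => by simpa using hz _
    have e : Ffun p 4 (fun x => - u (x + z)) (fun x => - u' (x + z)) =
        Ffun p 4 (fun x => u (x + z)) (fun x => u' (x + z)) := by simp [Ffun]
    have e2 : mass (fun x => - u (x + z)) = mass u := by
      rw [← mass_trans z u]; simp [mass]
    rw [e, e2] at this
    exact this

/-- A half-line calibrated function solves the first order equation. -/
lemma NiceH1.ode {u u' : ℝ → ℝ} (h : NiceH1 u u') {p ω : ℝ} (hp : 2 < p)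
    (hb : ∀ x, (2 / p) * |u x| ^ (p - 2) ≤ ω)
    (h0 : ∫ x in Ioi 0, (u' x + gg p ω (u x)) ^ 2 = 0) (x : ℝ) (hx : 0 ≤ x) :
    HasDerivWithinAt u (- gg p ω (u x)) (Ici x) x := by
  have hi := (h.half hp hb).1
  have hgc : Continuous fun x => gg p ω (u x) := (gg_cont hp ω).comp h.cont
  rw [integral_eq_zero_iff_of_nonneg (fun x => sq_nonneg _) hi.integrableOn] at h0
  have hae : ∀ᵐ x, x ∈ Ioi (0:ℝ) → u' x = - gg p ω (u x) := by
    have := (ae_restrict_iff' measurableSet_Ioi).1 h0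
    filter_upwards [this] with y hy hy0
    have : (u' y + gg p ω (u y)) ^ 2 = 0 := hy hy0
    have := pow_eq_zero_iff (two_ne_zero) |>.1 this
    linarith
  have heq : ∀ y ∈ Ici x, u y = u x + ∫ t in x..y, - gg p ω (u t) := by
    intro y hy
    have hxy : x ≤ y := hy
    rw [← intervalIntegral.integral_congr_ae (f := u'), ← h.ftc]
    · ring
    · filter_upwards [hae] with t ht ht2
      rw [uIoc_of_le hxy] at ht2
      exact ht (lt_of_le_of_lt hx ht2.1)
  have hd : HasDerivAt (fun y => u x + ∫ t in x..y, - gg p ω (u t)) (- gg p ω (u x)) x :=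
    ((hgc.neg.integral_hasStrictDerivAt x x).hasDerivAt).const_add _
  exact hd.hasDerivWithinAt.congr heq (heq x self_mem_Ici)

lemma half_unique {p c : ℝ} (hp : 2 < p) (hc : 0 < c) {u v : ℝ → ℝ} (hu : Continuous u)
    (hv : Continuous v) (hur : ∀ x, u x ∈ Icc 0 c) (hvr : ∀ x, v x ∈ Icc 0 c)
    (hud : ∀ x, 0 ≤ x → HasDerivWithinAt u (- gg p (om p c) (u x)) (Ici x) x)
    (hvd : ∀ x, 0 ≤ x → HasDerivWithinAt v (- gg p (om p c) (v x)) (Ici x) x)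
    (h0 : u 0 = v 0) (x : ℝ) (hx : 0 ≤ x) : u x = v x := by
  obtain ⟨K, hK⟩ := gg_lip hp hc
  refine ODE_solution_unique_of_mem_Icc_right (K := K) (a := 0) (b := x)
    (v := fun _ s => - gg p (om p c) s) (s := fun _ => Icc 0 c) (fun t _ => hK.neg)
    hu.continuousOn (fun t ht => hud t ht.1) (fun t _ => hur t) hv.continuousOn
    (fun t ht => hvd t ht.1) (fun t _ => hvr t) h0 ⟨hx, le_rfl⟩

/-- Structure of nonnegative functions reaching the minimal level. -/
lemma NiceH1.rigid {u u' : ℝ → ℝ} (h : NiceH1 u u') {p μ c : ℝ} (hp : 2 < p) (hc : 0 < c)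
    (hmin : ∀ d, 0 ≤ d → d ≠ c → Phi p μ c < Phi p μ d) (hm : mass u = μ)
    (hu : ∀ x, 0 ≤ u x) (hF : Ffun p 4 u u' ≤ Phi p μ c) :
    u 0 = c ∧ (∀ x, u x ∈ Icc 0 c) ∧
    (∀ x, 0 ≤ x → HasDerivWithinAt u (- gg p (om p c) (u x)) (Ici x) x) ∧
    (∀ x, 0 ≤ x → HasDerivWithinAt (fun x => u (-x)) (- gg p (om p c) (u (-x))) (Ici x) x) := by
  obtain ⟨z, hz⟩ := h.exists_max
  have hl := h.lower hp hz
  rw [hm] at hl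
  simp only [abs_of_nonneg (hu _)] at hz hl
  have h4 : u 0 ^ 4 ≤ u z ^ 4 := pow_le_pow_left₀ (hu 0) (hz 0) 4
  have hzc : u z = c := by
    by_contra hne
    have := hmin (u z) (hu z) hne
    linarith
  rw [hzc] at hl hz h4
  have h0 : u 0 = c := by
    by_contra hne
    have : u 0 < c := lt_of_le_of_ne (hz 0) hne
    have := pow_lt_pow_left₀ this (hu 0) (show 4 ≠ 0 by norm_num)
    linarith
  have hb : ∀ x, (2 / p) * |u x| ^ (p - 2) ≤ om p c := fun x =>
    om_bound hp (by rw [abs_of_nonneg (hu x)]; exact hz x)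
  have hbog := h.bogo hp hb
  have h1 : 0 ≤ ∫ x in Ioi 0, (u' x + gg p (om p c) (u x)) ^ 2 :=
    integral_nonneg fun x => sq_nonneg _
  have h2 : 0 ≤ ∫ x in Ioi 0, (- u' (-x) + gg p (om p c) (u (-x))) ^ 2 :=
    integral_nonneg fun x => sq_nonneg _
  rw [h0, hm] at hbog
  unfold Phi at hF
  refine ⟨h0, fun x => ⟨hu x, hz x⟩, h.ode hp hb (by linarith),
    h.refl.ode hp (fun x => hb (-x)) (by linarith)⟩

theorem stmt11 (p μ : ℝ) (hp : 2 < p) (hp' : p < 6) (hμ : 0 < μ) (hμ' : μ < 2) :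
    (∃ C : ℝ, ∀ u u' : ℝ → ℝ, IsH1 u u' → mass u = μ → C ≤ Ffun p 4 u u') ∧
    (∃ u₀ u₀' : ℝ → ℝ, IsH1 u₀ u₀' ∧ mass u₀ = μ ∧ Ffun p 4 u₀ u₀' < 0) ∧
    (∃ u u' : ℝ → ℝ, IsH1 u u' ∧ mass u = μ ∧
      ∀ v v' : ℝ → ℝ, IsH1 v v' → mass v = μ → Ffun p 4 u u' ≤ Ffun p 4 v v') ∧
    (∀ u u' v v' : ℝ → ℝ,
      IsH1 u u' → (∀ x, 0 ≤ u x) → mass u = μ →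
      (∀ w w' : ℝ → ℝ, IsH1 w w' → mass w = μ → Ffun p 4 u u' ≤ Ffun p 4 w w') →
      IsH1 v v' → (∀ x, 0 ≤ v x) → mass v = μ →
      (∀ w w' : ℝ → ℝ, IsH1 w w' → mass w = μ → Ffun p 4 v v' ≤ Ffun p 4 w w') →
      u = v) := by
  obtain ⟨c, hc, hN⟩ := exists_c hp hp' hμ hμ'
  obtain ⟨hneg, hmin⟩ := Phi_min hp hp' hc hN
  obtain ⟨g, g', hg, hgm, hgF⟩ := exists_gs hp hc
  have hgm' : mass g = μ := by rw [hgm, hN]; ring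
  have hgP : Ffun p 4 g g' = Phi p μ c := by rw [hgF, hgm']; rfl
  have hlow : ∀ u u' : ℝ → ℝ, IsH1 u u' → mass u = μ → Phi p μ c ≤ Ffun p 4 u u' := by
    intro u u' h hm
    have hn := h.nice (by rw [hm]; exact hμ)
    obtain ⟨z, hz⟩ := hn.exists_max
    have hl := hn.lower hp hz
    rw [hm] at hl
    have h4 : u 0 ^ 4 ≤ u z ^ 4 := by
      have := pow_le_pow_left₀ (abs_nonneg _) (hz 0) 4
      rwa [Even.pow_abs (by decide), Even.pow_abs (by decide)] at this
    rcases eq_or_ne |u z| c with hd | hd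
    · rw [hd] at hl; linarith
    · have := hmin _ (abs_nonneg _) hd
      linarith
  refine ⟨⟨_, hlow⟩, ⟨g, g', hg.isH1, hgm', by rw [hgP]; exact hneg⟩,
    ⟨g, g', hg.isH1, hgm', fun v v' hv hm => by rw [hgP]; exact hlow v v' hv hm⟩, ?_⟩
  intro u u' v v' hu hu0 hum hug hv hv0 hvm hvg
  have hun := hu.nice (by rw [hum]; exact hμ)
  have hvn := hv.nice (by rw [hvm]; exact hμ)
  obtain ⟨a1, a2, a3, a4⟩ := hun.rigid hp hc hmin hum hu0 (hgP ▸ hug g g' hg.isH1 hgm')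
  obtain ⟨b1, b2, b3, b4⟩ := hvn.rigid hp hc hmin hvm hv0 (hgP ▸ hvg g g' hg.isH1 hgm')
  funext x
  rcases le_total 0 x with hx | hx
  · exact half_unique hp hc hun.cont hvn.cont a2 b2 a3 b3 (a1.trans b1.symm) x hx
  · have := half_unique hp hc hun.refl.cont hvn.refl.cont (fun x => a2 (-x)) (fun x => b2 (-x))
      a4 b4 (by simp [a1, b1]) (-x) (by linarith)
    simpa using this
end
end

section
/- Let 2 < p < 6 and μ ≥ 2. Then F_{p,4} is unbounded below on the mass-constraint set: for every M ∈ ℝ there exists u ∈ H¹(ℝ) with ‖u‖₂² = μ and F_{p,4}(u) < M. In particular no ground state of F_{p,4} at mass μ exists. -/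
open MeasureTheory Real Set

noncomputable section

theorem aux_int (c : ℝ) (hc : 0 < c) : ∫ x : ℝ, exp (-c * |x|) = 2 / c := by
  rw [integral_comp_abs (f := fun x => exp (-c * x)), integral_exp_mul_Ioi (by linarith) 0]
  simp
  field_simp

theorem aux_integrable (c : ℝ) (hc : 0 < c) : Integrable (fun x : ℝ => exp (-c * |x|)) := by
  by_contra h
  have h1 := aux_int c hc
  rw [integral_undef h] at h1
  have : 0 < 2 / c := by positivity
  linarith

theorem aux_main (p μ k : ℝ) (hp : 2 < p) (hμ : 2 ≤ μ) (hk : 0 < k) :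
    ∃ u u' : ℝ → ℝ, IsH1 u u' ∧ mass u = μ ∧ Ffun p 4 u u' ≤ - (2 / p ^ 2 * k ^ (p / 2 - 1)) := by
  have hμ0 : 0 < μ := by linarith
  have hp0 : 0 < p := by linarith
  set A : ℝ := √(μ * k) with hA
  have hA2 : A ^ 2 = μ * k := Real.sq_sqrt (by positivity)
  have hA0 : 0 < A := Real.sqrt_pos.2 (by positivity)
  set u : ℝ → ℝ := fun x => A * exp (-k * |x|) with hu
  set u' : ℝ → ℝ := fun x => if x < 0 then k * u x else -k * u x with hu'
  have hcont : Continuous u := by rw [hu]; fun_prop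
  have husq : (fun x => u x ^ 2) = fun x => (μ * k) * exp (-(2 * k) * |x|) := by
    funext x
    simp only [hu]
    rw [mul_pow, hA2, ← exp_nat_mul]
    congr 2
    push_cast
    ring
  have hu'sq : (fun x => u' x ^ 2) = fun x => k ^ 2 * u x ^ 2 := by
    funext x
    simp only [hu']
    split_ifs <;> ring
  have hup : (fun x => |u x| ^ p) = fun x => A ^ p * exp (-(p * k) * |x|) := by
    funext x
    simp only [hu]
    rw [abs_of_pos (by positivity), mul_rpow hA0.le (exp_pos _).le, ← exp_mul]
    congr 2
    ring
  have hint2 : Integrable (fun x => u x ^ 2) := by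
    rw [husq]
    exact (aux_integrable _ (by positivity)).const_mul _
  have hmass : ∫ x, u x ^ 2 = μ := by
    rw [husq, integral_const_mul, aux_int _ (by positivity)]
    field_simp
  have hder : ∫ x, u' x ^ 2 = k ^ 2 * μ := by
    rw [hu'sq, integral_const_mul, hmass]
  have hpow : ∫ x, |u x| ^ p = A ^ p * (2 / (p * k)) := by
    rw [hup, integral_const_mul, aux_int _ (by positivity)]
  have hu'int : Integrable u' := by
    have h1 : Integrable u := (aux_integrable k hk).const_mul A
    have hm : Measurable u' :=
      Measurable.ite measurableSet_Iio (hcont.measurable.const_mul _) (hcont.measurable.const_mul _)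
    refine Integrable.mono' (h1.const_mul k) hm.aestronglyMeasurable (Filter.Eventually.of_forall ?_)
    intro x
    have : 0 < u x := by simp only [hu]; positivity
    simp only [hu', norm_eq_abs]
    split_ifs
    · rw [abs_of_pos (by positivity)]
    · rw [neg_mul, abs_neg, abs_of_pos (by positivity)]
  refine ⟨u, u', ⟨hcont, hint2, ?_, ?_⟩, hmass, ?_⟩
  · rw [hu'sq]; exact hint2.const_mul _
  · intro a b hab
    symm
    refine integral_eq_of_hasDerivAt_off_countable_of_le u u' hab (countable_singleton (0 : ℝ))
      hcont.continuousOn ?_ hu'int.intervalIntegrable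
    rintro x ⟨-, hx⟩
    have hx0 : x ≠ 0 := hx
    rcases lt_or_gt_of_ne hx0 with h | h
    · have := (((hasDerivAt_abs_neg h).const_mul (-k)).exp).const_mul A
      refine this.congr_deriv ?_
      simp only [hu', hu, if_pos h]
      ring
    · have := (((hasDerivAt_abs_pos h).const_mul (-k)).exp).const_mul A
      refine this.congr_deriv ?_
      simp only [hu', hu, if_neg h.not_gt]
      ring
  · have h0 : |u 0| ^ (4 : ℝ) = (μ * k) ^ 2 := by
      have : u 0 = A := by simp [hu]
      rw [this, abs_of_pos hA0, ← hA2]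
      norm_cast
      ring
    have hAp : k ^ (p / 2) ≤ A ^ p := by
      have : A ^ p = (μ * k) ^ (p / 2) := by
        rw [← hA2, ← rpow_natCast, ← rpow_mul hA0.le]
        congr 1
        push_cast
        ring
      rw [this]
      exact rpow_le_rpow hk.le (by nlinarith) (by positivity)
    have h3 : k ^ (p / 2 - 1) = k ^ (p / 2) / k := by
      rw [rpow_sub hk, rpow_one]
    unfold Ffun
    rw [hder, hpow, h0, h3]
    have h4 : 2 / p ^ 2 * (k ^ (p / 2) / k) ≤ 1 / p * (A ^ p * (2 / (p * k))) := by
      have : 1 / p * (A ^ p * (2 / (p * k))) = 2 / p ^ 2 * (A ^ p / k) := by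
        field_simp
      rw [this]
      gcongr
    have h5 : 0 ≤ k ^ 2 * (μ * (μ - 2)) := by
      have : 0 ≤ μ - 2 := by linarith
      positivity
    nlinarith

theorem stmt12 (p μ : ℝ) (hp : 2 < p) (hp' : p < 6) (hμ : 2 ≤ μ) :
    (∀ M : ℝ, ∃ u u' : ℝ → ℝ, IsH1 u u' ∧ mass u = μ ∧ Ffun p 4 u u' < M) ∧
    ¬ (∃ u u' : ℝ → ℝ, IsH1 u u' ∧ mass u = μ ∧
        ∀ v v' : ℝ → ℝ, IsH1 v v' → mass v = μ → Ffun p 4 u u' ≤ Ffun p 4 v v') := by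
  have key : ∀ M : ℝ, ∃ u u' : ℝ → ℝ, IsH1 u u' ∧ mass u = μ ∧ Ffun p 4 u u' < M := by
    intro M
    have ht := (tendsto_rpow_atTop (show 0 < p / 2 - 1 by linarith)).const_mul_atTop
      (show 0 < 2 / p ^ 2 by positivity)
    obtain ⟨k, hk, hk0⟩ :=
      ((ht.eventually_gt_atTop (-M)).and (Filter.eventually_gt_atTop 0)).exists
    obtain ⟨u, u', h1, h2, h3⟩ := aux_main p μ k hp hμ hk0
    exact ⟨u, u', h1, h2, by linarith⟩
  refine ⟨key, ?_⟩
  rintro ⟨u, u', -, -, h⟩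
  obtain ⟨v, v', h1, h2, h3⟩ := key (Ffun p 4 u u')
  exact absurd (h v v' h1 h2) (not_le.2 h3)
end
end

section
/- Let μ* := √3·(π/2 − arcsin(√(3/7))). If 0 < μ ≤ μ*, then F_{6,4}(u) ≥ 0 for every u ∈ H¹(ℝ) with ‖u‖₂² = μ, and for every ε > 0 there exists such u with F_{6,4}(u) < ε (so the constrained infimum equals 0). If μ > μ*, then for every M ∈ ℝ there exists u ∈ H¹(ℝ) with ‖u‖₂² = μ and F_{6,4}(u) < M (so the constrained infimum equals −∞). -/
open MeasureTheory Real Set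

noncomputable section

theorem Ffun_eq (u u' : ℝ → ℝ) : Ffun 6 4 u u' =
    (1 / 2) * (∫ x, (u' x) ^ 2) - (1 / 6) * (∫ x, (u x) ^ 6) - (1 / 4) * (u 0) ^ 4 := by
  have h6 : ∀ y : ℝ, |y| ^ (6 : ℝ) = y ^ 6 := by
    intro y
    have : |y| ^ ((6 : ℕ) : ℝ) = |y| ^ 6 := Real.rpow_natCast _ _
    rw [Even.pow_abs (by decide)] at this
    simpa using this
  have h4 : ∀ y : ℝ, |y| ^ (4 : ℝ) = y ^ 4 := by
    intro y
    have : |y| ^ ((4 : ℕ) : ℝ) = |y| ^ 4 := Real.rpow_natCast _ _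
    rw [Even.pow_abs (by decide)] at this
    simpa using this
  unfold Ffun
  simp only [h6, h4]

theorem scale_lemma {u u' : ℝ → ℝ} (h : IsH1 u u') {l : ℝ} (hl : 0 < l) :
    ∃ v v' : ℝ → ℝ, IsH1 v v' ∧ mass v = mass u ∧ Ffun 6 4 v v' = l ^ 2 * Ffun 6 4 u u' := by
  obtain ⟨hc, hu, hu', hd⟩ := h
  have hs : (√l) ^ 2 = l := Real.sq_sqrt hl.le
  have e1 : ∀ x, (√l * u (l * x)) ^ 2 = l * u (l * x) ^ 2 := by
    intro x; rw [mul_pow, hs]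
  have e2 : ∀ x, (√l * (l * u' (l * x))) ^ 2 = l ^ 3 * u' (l * x) ^ 2 := by
    intro x; rw [mul_pow, hs]; ring
  have e6 : ∀ x, (√l * u (l * x)) ^ 6 = l ^ 3 * u (l * x) ^ 6 := by
    intro x
    have : (√l) ^ 6 = l ^ 3 := by rw [show (6:ℕ) = 2 * 3 from rfl, pow_mul, hs]
    rw [mul_pow, this]
  have e4 : (√l * u 0) ^ 4 = l ^ 2 * u 0 ^ 4 := by
    have : (√l) ^ 4 = l ^ 2 := by rw [show (4:ℕ) = 2 * 2 from rfl, pow_mul, hs]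
    rw [mul_pow, this]
  refine ⟨fun x => √l * u (l * x), fun x => √l * (l * u' (l * x)), ⟨by fun_prop, ?_, ?_, ?_⟩, ?_, ?_⟩
  · simp only [e1]
    exact (hu.comp_mul_left' hl.ne').const_mul l
  · simp only [e2]
    exact (hu'.comp_mul_left' hl.ne').const_mul (l ^ 3)
  · intro a b hab
    rw [intervalIntegral.integral_const_mul, intervalIntegral.integral_const_mul,
      intervalIntegral.mul_integral_comp_mul_left, ← hd _ _ (by gcongr)]
    ring
  · unfold mass
    simp only [e1]
    rw [integral_const_mul, Measure.integral_comp_mul_left (fun y => u y ^ 2), abs_of_pos (by positivity)]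
    simp only [smul_eq_mul]
    field_simp
  · rw [Ffun_eq, Ffun_eq]
    simp only [e2, e6, mul_zero, e4]
    rw [integral_const_mul, integral_const_mul, Measure.integral_comp_mul_left (fun y => u y ^ 6),
      Measure.integral_comp_mul_left (fun y => u' y ^ 2), abs_of_pos (by positivity)]
    simp only [smul_eq_mul]
    field_simp

theorem amp_lemma {u u' : ℝ → ℝ} (h : IsH1 u u') (t : ℝ) :
    IsH1 (fun x => t * u x) (fun x => t * u' x) ∧ mass (fun x => t * u x) = t ^ 2 * mass u ∧
    Ffun 6 4 (fun x => t * u x) (fun x => t * u' x) =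
      t ^ 2 * Ffun 6 4 u u' + t ^ 2 * (1 - t ^ 4) * ((∫ x, (u x) ^ 6) / 6)
        + t ^ 2 * (1 - t ^ 2) * (u 0 ^ 4 / 4) := by
  obtain ⟨hc, hu, hu', hd⟩ := h
  refine ⟨⟨by fun_prop, ?_, ?_, ?_⟩, ?_, ?_⟩
  · simp only [mul_pow]; exact hu.const_mul _
  · simp only [mul_pow]; exact hu'.const_mul _
  · intro a b hab
    rw [intervalIntegral.integral_const_mul, ← hd _ _ hab]; ring
  · unfold mass
    simp only [mul_pow]; rw [integral_const_mul]
  · rw [Ffun_eq, Ffun_eq]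
    simp only [mul_pow]; rw [integral_const_mul, integral_const_mul]
    ring

theorem integrable_abs_comp {g : ℝ → ℝ} (hg : IntegrableOn g (Ioi 0)) :
    Integrable (fun x => g |x|) := by
  have hf : IntegrableOn (fun x => g |x|) (Ioi 0) :=
    hg.congr_fun (fun x hx => by simp only [abs_of_pos (mem_Ioi.1 hx)]) measurableSet_Ioi
  have int_Iic : IntegrableOn (fun x ↦ g |x|) (Iic 0) := by
    rw [← Measure.map_neg_eq_self (volume : Measure ℝ)]
    let m : MeasurableEmbedding fun x : ℝ => -x := (Homeomorph.neg ℝ).measurableEmbedding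
    rw [m.integrableOn_map_iff]
    simp_rw [Function.comp_def, abs_neg, neg_preimage, neg_Iic, neg_zero]
    exact Iff.mpr integrableOn_Ici_iff_integrableOn_Ioi hf
  rw [← integrableOn_univ, ← Iic_union_Ioi (a := (0:ℝ))]
  exact int_Iic.union hf

theorem even_isH1 {f f' : ℝ → ℝ} (hd : ∀ y, HasDerivAt f (f' y) y) (hc' : Continuous f')
    (h1 : IntegrableOn (fun y => f y ^ 2) (Ioi 0)) (h2 : IntegrableOn (fun y => f' y ^ 2) (Ioi 0)) :
    IsH1 (fun x => f |x|) (fun x => (if 0 ≤ x then 1 else -1) * f' |x|) := by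
  have hc : Continuous f := continuous_iff_continuousAt.2 fun y => (hd y).continuousAt
  have hsq : ∀ x : ℝ, ((if 0 ≤ x then (1:ℝ) else -1) * f' |x|) ^ 2 = f' |x| ^ 2 := by
    intro x; split_ifs <;> ring
  refine ⟨by fun_prop, integrable_abs_comp h1, ?_, ?_⟩
  · simp only [hsq]; exact integrable_abs_comp h2
  · intro a b hab
    symm
    apply integral_eq_of_hasDerivAt_off_countable (fun x => f |x|) _ (countable_singleton (0:ℝ))
    · fun_prop
    · rintro x ⟨-, hx⟩
      simp only [mem_singleton_iff] at hx
      rcases lt_or_gt_of_ne hx with h | h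
      · rw [if_neg (not_le.2 h), mul_comm]
        exact (hd |x|).comp x (hasDerivAt_abs_neg h)
      · rw [if_pos h.le, mul_comm]
        exact (hd |x|).comp x (hasDerivAt_abs_pos h)
    · have hb : IntervalIntegrable (fun x => f' |x|) volume a b :=
        (by fun_prop : Continuous fun x => f' |x|).intervalIntegrable a b
      refine hb.norm.mono_fun ?_ ?_
      · refine Measurable.aestronglyMeasurable ?_
        refine Measurable.mul (Measurable.ite measurableSet_Ici measurable_const measurable_const) ?_
        exact (by fun_prop : Continuous fun x => f' |x|).measurable
      · refine Filter.Eventually.of_forall fun x => ?_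
        simp only [norm_mul, norm_norm]
        split_ifs <;> simp

theorem soliton_exists : ∃ w w' : ℝ → ℝ, IsH1 w w' ∧
    mass w = Real.sqrt 3 * (Real.pi / 2 - Real.arcsin (Real.sqrt (3 / 7))) ∧
    Ffun 6 4 w w' = 0 ∧ w 0 ≠ 0 := by
  obtain ⟨k, hk⟩ : ∃ k, k = arsinh (√3 / 2) := ⟨_, rfl⟩
  have h3 : (√3) ^ 2 = 3 := Real.sq_sqrt (by norm_num)
  have h3p : 0 < √3 := by positivity
  have hsk : sinh k = √3 / 2 := by rw [hk, sinh_arsinh]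
  have hck : cosh k ^ 2 = 7 / 4 := by rw [cosh_sq, hsk, div_pow, h3]; norm_num
  have hcp : ∀ y : ℝ, 0 < cosh (2 * y + k) := fun y => cosh_pos _
  have hlin : ∀ y : ℝ, HasDerivAt (fun y : ℝ => 2 * y + k) 2 y := by
    intro y; simpa using ((hasDerivAt_id y).const_mul 2).add_const k
  have hdc : ∀ y : ℝ, HasDerivAt (fun y : ℝ => cosh (2 * y + k)) (sinh (2 * y + k) * 2) y :=
    fun y => (hasDerivAt_cosh _).comp y (hlin y)
  have hds : ∀ y : ℝ, HasDerivAt (fun y : ℝ => sinh (2 * y + k)) (cosh (2 * y + k) * 2) y :=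
    fun y => (hasDerivAt_sinh _).comp y (hlin y)
  have hcs : ∀ y : ℝ, sinh (2 * y + k) ^ 2 = cosh (2 * y + k) ^ 2 - 1 := fun y => by
    rw [cosh_sq]; ring
  have hc1 : ∀ y : ℝ, 1 ≤ cosh (2 * y + k) := fun y => one_le_cosh _
  -- limits
  have hlt : Filter.Tendsto (fun y : ℝ => 2 * y + k) Filter.atTop Filter.atTop :=
    Filter.tendsto_atTop_add_const_right _ _ (Filter.tendsto_id.const_mul_atTop (by norm_num))
  have hst : Filter.Tendsto (fun y : ℝ => sinh (2 * y + k)) Filter.atTop Filter.atTop := by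
    refine Filter.tendsto_atTop_mono' _ ?_ hlt
    filter_upwards [hlt.eventually_ge_atTop 0] with y hy using self_le_sinh_iff.2 hy
  have hct : Filter.Tendsto (fun y : ℝ => cosh (2 * y + k)) Filter.atTop Filter.atTop :=
    Filter.tendsto_atTop_mono (fun y => (sinh_lt_cosh _).le) hst
  -- integrals
  have hda : ∀ y ∈ Ici (0:ℝ), HasDerivAt (fun y : ℝ => (1/2) * arctan (sinh (2 * y + k)))
      (1 / cosh (2 * y + k)) y := by
    intro y _
    have := ((hds y).arctan).const_mul (1/2 : ℝ)
    refine this.congr_deriv ?_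
    have := hcp y
    rw [hcs]; field_simp; ring
  have hta : Filter.Tendsto (fun y : ℝ => (1/2) * arctan (sinh (2 * y + k))) Filter.atTop
      (nhds ((1/2) * (π / 2))) :=
    ((tendsto_arctan_atTop.mono_right nhdsWithin_le_nhds).comp hst).const_mul _
  have hi1 : IntegrableOn (fun y : ℝ => 1 / cosh (2 * y + k)) (Ioi 0) :=
    integrableOn_Ioi_deriv_of_nonneg' hda (fun y _ => by have := hcp y; positivity) hta
  have hI1 := integral_Ioi_of_hasDerivAt_of_tendsto' hda hi1 hta
  have hi3 : IntegrableOn (fun y : ℝ => 1 / cosh (2 * y + k) ^ 3) (Ioi 0) := by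
    refine Integrable.mono' hi1 ?_ ?_
    · refine Continuous.aestronglyMeasurable ?_
      exact continuous_const.div (by fun_prop) (fun y => (pow_pos (hcp y) 3).ne')
    · refine Filter.Eventually.of_forall fun y => ?_
      have := hcp y
      rw [Real.norm_of_nonneg (by positivity)]
      apply one_div_le_one_div_of_le this
      exact le_self_pow₀ (hc1 y) (by norm_num)
  have hdE : ∀ y ∈ Ici (0:ℝ), HasDerivAt
      (fun y : ℝ => -(√3/4) * (sinh (2 * y + k) / cosh (2 * y + k) ^ 2))
      ((√3/2) * (1 / cosh (2 * y + k)) - √3 * (1 / cosh (2 * y + k) ^ 3)) y := by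
    intro y _
    have hcy := hcp y
    have hc2 : HasDerivAt (fun y : ℝ => cosh (2 * y + k) ^ 2)
        (2 * cosh (2 * y + k) * (sinh (2 * y + k) * 2)) y := by simpa using (hdc y).fun_pow 2
    have := ((hds y).fun_div hc2 (pow_pos hcy 2).ne').const_mul (-(√3/4))
    refine this.congr_deriv ?_
    have hh := hcs y
    clear this
    clear hc2
    generalize cosh (2 * y + k) = c at *
    generalize sinh (2 * y + k) = s at *
    field_simp
    linear_combination 8 * hh
  have htE : Filter.Tendsto (fun y : ℝ => -(√3/4) * (sinh (2 * y + k) / cosh (2 * y + k) ^ 2))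
      Filter.atTop (nhds (-(√3/4) * 0)) := by
    refine Filter.Tendsto.const_mul _ ?_
    refine squeeze_zero_norm ?_ hct.inv_tendsto_atTop
    intro y
    have hcy := hcp y
    have h1 : |sinh (2 * y + k)| ≤ cosh (2 * y + k) := by
      apply abs_le_of_sq_le_sq _ hcy.le
      rw [hcs]; linarith
    simp only [Pi.inv_apply]
    rw [Real.norm_eq_abs, abs_div, abs_of_pos (pow_pos hcy 2), div_le_iff₀ (pow_pos hcy 2)]
    field_simp
    exact h1
  have hiE := (hi1.const_mul (√3/2)).sub (hi3.const_mul (√3))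
  have hIE := integral_Ioi_of_hasDerivAt_of_tendsto' hdE hiE htE
  -- the profile
  obtain ⟨f, hf⟩ : ∃ f : ℝ → ℝ, f = fun y => √(√3 / cosh (2 * y + k)) := ⟨_, rfl⟩
  have hfp : ∀ y, 0 < f y := fun y => by rw [hf]; have := hcp y; positivity
  have hf2 : ∀ y, f y ^ 2 = √3 * (1 / cosh (2 * y + k)) := fun y => by
    rw [hf]; have := hcp y; simp only; rw [Real.sq_sqrt (by positivity)]; ring
  have hf4 : f 0 ^ 4 = 12 / 7 := by
    rw [show (4:ℕ) = 2 * 2 from rfl, pow_mul, hf2, mul_zero, zero_add, mul_pow, h3, div_pow, hck]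
    norm_num
  have hf6 : ∀ y, f y ^ 6 = 3 * √3 * (1 / cosh (2 * y + k) ^ 3) := fun y => by
    rw [show (6:ℕ) = 2 * 3 from rfl, pow_mul, hf2, mul_pow, div_pow]
    rw [show (√3)^3 = 3 * √3 by rw [pow_succ, h3]]; norm_num
  obtain ⟨f', hf'⟩ : ∃ f' : ℝ → ℝ, f' = fun y => -(f y * (sinh (2 * y + k) / cosh (2 * y + k))) :=
    ⟨_, rfl⟩
  have hdf : ∀ y, HasDerivAt f (f' y) y := by
    intro y
    have hcy := hcp y
    have h1 : HasDerivAt (fun y => √3 / cosh (2 * y + k))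
      ((0 * cosh (2 * y + k) - √3 * (sinh (2 * y + k) * 2)) / cosh (2 * y + k) ^ 2) y :=
      (hasDerivAt_const y (√3)).div (hdc y) hcy.ne'
    have h2 := h1.sqrt (by positivity)
    rw [show (fun y => √(√3 / cosh (2 * y + k))) = f from hf.symm,
      show √(√3 / cosh (2 * y + k)) = f y by rw [hf]] at h2
    convert h2 using 1
    have hfy := hfp y
    have h5 := hf2 y
    rw [hf']
    field_simp
    field_simp at h5
    linear_combination (-2 * sinh (2 * y + k)) * h5
  have hf'2 : ∀ y, f' y ^ 2 = √3 * (1 / cosh (2 * y + k)) - √3 * (1 / cosh (2 * y + k) ^ 3) := by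
    intro y
    have hcy := hcp y
    rw [hf']
    simp only
    rw [neg_sq, mul_pow, hf2, div_pow, hcs]
    field_simp
  have hfc : Continuous f := continuous_iff_continuousAt.2 fun y => (hdf y).continuousAt
  have hf'c : Continuous f' := by
    rw [hf']
    exact (hfc.mul (Continuous.div (by fun_prop) (by fun_prop) (fun y => (hcp y).ne'))).neg
  have hsq : ∀ x : ℝ, ((if 0 ≤ x then (1:ℝ) else -1) * f' |x|) ^ 2 = f' |x| ^ 2 := by
    intro x; split_ifs <;> ring
  have h12 : IntegrableOn (fun y => f' y ^ 2) (Ioi 0) := by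
    simp only [hf'2]; exact (hi1.const_mul _).sub (hi3.const_mul _)
  have h16 : IntegrableOn (fun y => f y ^ 6) (Ioi 0) := by
    simp only [hf6]; exact hi3.const_mul _
  refine ⟨fun x => f |x|, _, even_isH1 hdf hf'c ?_ h12, ?_, ?_, ?_⟩
  · simp only [hf2]; exact hi1.const_mul _
  · unfold mass
    rw [integral_comp_abs (f := fun y => f y ^ 2)]
    simp only [hf2]
    rw [integral_const_mul, hI1]
    simp only [mul_zero, zero_add, hsk]
    rw [arctan_eq_arcsin]
    have : √3 / 2 / √(1 + (√3 / 2) ^ 2) = √(3 / 7) := by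
      rw [div_pow, h3]
      symm
      rw [Real.sqrt_eq_iff_mul_self_eq (by norm_num) (by positivity)]
      rw [← sq, div_pow, div_pow, h3, Real.sq_sqrt (by norm_num)]
      norm_num
    rw [this]; ring
  · rw [Ffun_eq]
    simp only [hsq]
    rw [integral_comp_abs (f := fun y => f y ^ 6), integral_comp_abs (f := fun y => f' y ^ 2)]
    have key : (1/2) * (∫ y in Ioi (0:ℝ), f' y ^ 2) - (1/6) * (∫ y in Ioi (0:ℝ), f y ^ 6) = 3 / 14 := by
      rw [← integral_const_mul, ← integral_const_mul,
        ← integral_sub (h12.const_mul _) (h16.const_mul _)]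
      have : ∀ y, 1/2 * f' y ^ 2 - 1/6 * f y ^ 6 =
          (√3/2) * (1 / cosh (2 * y + k)) - √3 * (1 / cosh (2 * y + k) ^ 3) := by
        intro y; rw [hf'2, hf6]; ring
      simp only [this]
      rw [hIE]
      simp only [mul_zero, zero_add, hsk, hck]
      nlinarith [h3]
    simp only [abs_zero, hf4]
    linarith
  · simp only [abs_zero]; exact (hfp 0).ne'

theorem intervalIntegrable_of_isH1 {u u' : ℝ → ℝ} (h : IsH1 u u') (hm : mass u ≠ 0) (a b : ℝ) :
    IntervalIntegrable u' volume a b := by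
  obtain ⟨hc, hu, hu', hd⟩ := h
  wlog hab : a ≤ b generalizing a b
  · exact (this b a (le_of_not_ge hab)).symm
  by_contra hn
  apply hm
  have key : ∀ x y, x ≤ y → ¬ IntervalIntegrable u' volume x y → u y = u x := by
    intro x y hxy hxn
    have := hd x y hxy
    rw [intervalIntegral.integral_undef hxn] at this
    linarith
  have hout : ∀ x y, x ≤ a → b ≤ y → u y = u x := by
    intro x y hx hy
    refine key x y (by linarith) fun hI => hn (hI.mono_set ?_)
    rw [uIcc_of_le hab, uIcc_of_le (by linarith)]
    exact Icc_subset_Icc hx hy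
  have hba : u b = u a := hout a b le_rfl le_rfl
  have hconst : ∀ x, u x = u a := by
    intro x
    rcases le_total x a with hx | hx
    · rw [← hout x b hx le_rfl, hba]
    rcases le_total b x with hx' | hx'
    · exact hout a x le_rfl hx'
    by_cases hI : IntervalIntegrable u' volume a x
    · rw [← hba, key x b hx' fun hI' => hn (hI.trans hI')]
    · exact key a x hx hI
  simp only [hconst] at hu
  have : u a ^ 2 = 0 := by
    rcases integrable_const_iff.1 hu with h | h
    · exact h
    · simp [isFiniteMeasure_iff] at h
  unfold mass
  simp only [hconst, this, integral_zero]

theorem locInt_of {u' : ℝ → ℝ} (h : ∀ a b, IntervalIntegrable u' volume a b) :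
    LocallyIntegrable u' volume := by
  intro x
  refine ⟨Ioc (x - 1) (x + 1), Ioc_mem_nhds (by linarith) (by linarith), ?_⟩
  exact (intervalIntegrable_iff_integrableOn_Ioc_of_le (by linarith)).1 (h _ _)

theorem ftc_ac {f g : ℝ → ℝ} {a b : ℝ} (hf : AbsolutelyContinuousOnInterval f a b)
    (hg : ∀ᵐ x, x ∈ uIoc a b → HasDerivAt f (g x) x) :
    IntervalIntegrable g volume a b ∧ ∫ x in a..b, g x = f b - f a := by
  constructor
  · refine hf.intervalIntegrable_deriv.congr_ae ?_
    rw [Filter.EventuallyEq, ae_restrict_iff' measurableSet_uIoc]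
    filter_upwards [hg] with x hx hx' using (hx hx').deriv
  · rw [← hf.integral_deriv_eq_sub]
    apply intervalIntegral.integral_congr_ae
    filter_upwards [hg] with x hx hx' using (hx hx').deriv.symm

theorem u_eq {u u' : ℝ → ℝ} (h : IsH1 u u') : u = fun x => u 0 + ∫ t in (0:ℝ)..x, u' t := by
  obtain ⟨hc, hu, hu', hd⟩ := h
  funext x
  rcases le_total 0 x with hx | hx
  · rw [← hd 0 x hx]; ring
  · rw [intervalIntegral.integral_symm, ← hd x 0 hx]; ring

theorem u_ac {u u' : ℝ → ℝ} (h : IsH1 u u') (hI : ∀ a b, IntervalIntegrable u' volume a b) (x : ℝ) :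
    AbsolutelyContinuousOnInterval u 0 x := by
  rw [u_eq h]
  have h1 := (hI 0 x).absolutelyContinuousOnInterval_intervalIntegral (c := 0) (by simp)
  have h2 : AbsolutelyContinuousOnInterval (fun _ : ℝ => u 0) 0 x :=
    (contDiff_const.contDiffOn).absolutelyContinuousOnInterval
  exact h2.fun_add h1

theorem u_deriv {u u' : ℝ → ℝ} (h : IsH1 u u') (hI : ∀ a b, IntervalIntegrable u' volume a b) :
    ∀ᵐ x, HasDerivAt u (u' x) x := by
  filter_upwards [LocallyIntegrable.ae_hasDerivAt_integral (locInt_of hI)] with x hx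
  rw [u_eq h]
  exact (hx 0).const_add (u 0)

theorem u_bdd {u u' : ℝ → ℝ} (h : IsH1 u u') (hI : ∀ a b, IntervalIntegrable u' volume a b) :
    ∃ M, ∀ x, u x ^ 2 ≤ M := by
  refine ⟨u 0 ^ 2 + ∫ x, (u x ^ 2 + u' x ^ 2), fun x => ?_⟩
  have hac := (u_ac h hI x).fun_mul (u_ac h hI x)
  obtain ⟨h1, h2⟩ := ftc_ac (g := fun x => u' x * u x + u x * u' x) hac (by
    filter_upwards [u_deriv h hI] with y hy _ using hy.fun_mul hy)
  have h3 : ‖∫ y in (0:ℝ)..x, (u' y * u y + u y * u' y)‖ ≤ ∫ x, (u x ^ 2 + u' x ^ 2) := by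
    refine intervalIntegral.norm_integral_le_integral_norm_uIoc.trans ?_
    have hint : Integrable (fun x => u x ^ 2 + u' x ^ 2) := h.2.1.add h.2.2.1
    refine le_trans ?_ (setIntegral_le_integral (s := uIoc 0 x) hint
      (Filter.Eventually.of_forall fun y => by positivity))
    refine integral_mono_of_nonneg (Filter.Eventually.of_forall fun y => norm_nonneg _)
      hint.integrableOn (Filter.Eventually.of_forall fun y => ?_)
    simp only [Real.norm_eq_abs]
    rw [abs_le]
    constructor <;> nlinarith [sq_nonneg (u y + u' y), sq_nonneg (u y - u' y)]
  rw [h2, Real.norm_eq_abs] at h3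
  have := (abs_le.1 h3).2
  nlinarith

theorem u_six {u u' : ℝ → ℝ} (h : IsH1 u u') (hI : ∀ a b, IntervalIntegrable u' volume a b) :
    Integrable (fun x => u x ^ 6) := by
  obtain ⟨M, hM⟩ := u_bdd h hI
  have hM0 : 0 ≤ M := (sq_nonneg _).trans (hM 0)
  have hc := h.1
  refine (h.2.1.const_mul (M ^ 2)).mono' (by fun_prop) (Filter.Eventually.of_forall fun x => ?_)
  rw [Real.norm_of_nonneg (by positivity)]
  have h2 : (u x ^ 2) ^ 2 ≤ M ^ 2 := pow_le_pow_left₀ (sq_nonneg _) (hM x) 2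
  nlinarith [sq_nonneg (u x)]

theorem half_bound {u u' : ℝ → ℝ} (h : IsH1 u u') (hI : ∀ a b, IntervalIntegrable u' volume a b)
    {α : ℝ} (h1 : 2 / √3 * (∫ x in Ioi (0:ℝ), u x ^ 2) < α) (h2 : α < π) :
    u 0 ^ 4 * (√3 / 12 * (cos α / sin α)) ≤
      ∫ x in Ioi (0:ℝ), (1 / 2 * u' x ^ 2 - 1 / 6 * u x ^ 6) := by
  have h3 : (√3) ^ 2 = 3 := Real.sq_sqrt (by norm_num)
  have h3p : 0 < √3 := by positivity
  have hc := h.1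
  have hu := h.2.1
  obtain ⟨M, hM⟩ := u_bdd h hI
  have hM0 : 0 ≤ M := (sq_nonneg _).trans (hM 0)
  obtain ⟨q, hq⟩ : ∃ q : ℝ → ℝ, q = fun x => α - 2 / √3 * ∫ t in (0:ℝ)..x, u t ^ 2 := ⟨_, rfl⟩
  have hqd : ∀ x, HasDerivAt q (-(2 / √3 * u x ^ 2)) x := by
    intro x
    rw [hq]
    have : HasDerivAt (fun x => ∫ t in (0:ℝ)..x, u t ^ 2) (u x ^ 2) x :=
      (hc.pow 2).integral_hasStrictDerivAt 0 x |>.hasDerivAt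
    exact (this.const_mul (2 / √3)).const_sub α
  have hq0 : q 0 = α := by rw [hq]; simp
  obtain ⟨ε, hε⟩ : ∃ ε, ε = α - 2 / √3 * (∫ x in Ioi (0:ℝ), u x ^ 2) := ⟨_, rfl⟩
  have hεp : 0 < ε := by linarith
  have hqmem : ∀ x, 0 ≤ x → q x ∈ Icc ε α := by
    intro x hx
    rw [hq]
    simp only
    have a1 : 0 ≤ ∫ t in (0:ℝ)..x, u t ^ 2 :=
      intervalIntegral.integral_nonneg hx fun t _ => sq_nonneg _
    have a2 : ∫ t in (0:ℝ)..x, u t ^ 2 ≤ ∫ x in Ioi (0:ℝ), u x ^ 2 := by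
      rw [intervalIntegral.integral_of_le hx]
      exact setIntegral_mono_set hu.integrableOn
        (Filter.Eventually.of_forall fun t => sq_nonneg _) (Ioc_subset_Ioi_self.eventuallyLE)
    have a3 : 0 < 2 / √3 := by positivity
    constructor
    · rw [hε]; gcongr
    · have := mul_nonneg a3.le a1
      linarith
  have hsin : ∀ y ∈ Icc ε α, 0 < sin y := fun y hy =>
    sin_pos_of_pos_of_lt_pi (by linarith [hy.1]) (by linarith [hy.2])
  obtain ⟨C, hC⟩ := (isCompact_Icc (a := ε) (b := α)).exists_bound_of_continuousOn
    (f := fun y => √3 / 12 * (cos y / sin y))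
    (continuousOn_const.mul (continuous_cos.continuousOn.div continuous_sin.continuousOn
      fun y hy => (hsin y hy).ne'))
  have hqC : ContDiff ℝ 1 q := by
    rw [contDiff_one_iff_deriv]
    refine ⟨fun x => (hqd x).differentiableAt, ?_⟩
    rw [show deriv q = fun x => -(2 / √3 * u x ^ 2) from funext fun x => (hqd x).deriv]
    fun_prop
  -- the calibration
  have hmain : ∀ R, 0 ≤ R → u 0 ^ 4 * (√3 / 12 * (cos α / sin α)) -
      u R ^ 4 * (√3 / 12 * (cos (q R) / sin (q R))) ≤
      ∫ x in (0:ℝ)..R, (1 / 2 * u' x ^ 2 - 1 / 6 * u x ^ 6) := by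
    intro R hR
    have hua := u_ac h hI R
    have hua2 := hua.fun_mul hua
    have hua4 := hua2.fun_mul hua2
    have hψ : AbsolutelyContinuousOnInterval (fun x => √3 / 12 * (cos (q x) / sin (q x))) 0 R := by
      apply ContDiffOn.absolutelyContinuousOnInterval
      refine contDiffOn_const.mul (ContDiffOn.div (contDiff_cos.comp hqC).contDiffOn
        (contDiff_sin.comp hqC).contDiffOn ?_)
      intro x hx
      rw [uIcc_of_le hR] at hx
      exact (hsin _ (hqmem x hx.1)).ne'
    obtain ⟨i1, i2⟩ := ftc_ac (g := fun x =>
      4 * u x ^ 3 * u' x * (√3 / 12 * (cos (q x) / sin (q x))) +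
        u x ^ 4 * (1 / 6 * (1 + (cos (q x) / sin (q x)) ^ 2) * u x ^ 2)) (hua4.fun_mul hψ) (by
      filter_upwards [u_deriv h hI] with x hx hxm
      rw [uIoc_of_le hR] at hxm
      have hs := hsin _ (hqmem x hxm.1.le)
      have d1 := (hx.fun_mul hx).fun_mul (hx.fun_mul hx)
      have d2 : HasDerivAt (fun x => √3 / 12 * (cos (q x) / sin (q x))) _ x :=
        (((hqd x).cos).fun_div ((hqd x).sin) hs.ne').const_mul (√3 / 12)
      refine (d1.fun_mul d2).congr_deriv ?_
      have hsc := sin_sq_add_cos_sq (q x)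
      generalize sin (q x) = s at *
      generalize cos (q x) = c at *
      field_simp
      ring)
    have i3 : IntervalIntegrable (fun x => 1 / 2 * u' x ^ 2 - 1 / 6 * u x ^ 6) volume 0 R :=
      ((h.2.2.1.const_mul _).sub ((u_six h hI).const_mul _)).intervalIntegrable
    have i4 : 0 ≤ ∫ x in (0:ℝ)..R, ((1 / 2 * u' x ^ 2 - 1 / 6 * u x ^ 6) +
      (4 * u x ^ 3 * u' x * (√3 / 12 * (cos (q x) / sin (q x))) +
        u x ^ 4 * (1 / 6 * (1 + (cos (q x) / sin (q x)) ^ 2) * u x ^ 2))) := by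
      refine intervalIntegral.integral_nonneg hR fun x _ => ?_
      generalize cos (q x) / sin (q x) = c
      have : (1 / 2 * u' x ^ 2 - 1 / 6 * u x ^ 6) + (4 * u x ^ 3 * u' x * (√3 / 12 * c) +
          u x ^ 4 * (1 / 6 * (1 + c ^ 2) * u x ^ 2)) = 1 / 2 * (u' x + u x ^ 3 * (√3 / 3 * c)) ^ 2 := by
        linear_combination (-(u x ^ 6 * c ^ 2 / 18)) * h3
      rw [this]; positivity
    rw [intervalIntegral.integral_add i3 i1, i2, hq0] at i4
    linarith
  -- limit
  by_contra hcon
  push Not at hcon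
  have hint : Integrable (fun x => 1 / 2 * u' x ^ 2 - 1 / 6 * u x ^ 6) :=
    (h.2.2.1.const_mul _).sub ((u_six h hI).const_mul _)
  have hlim := intervalIntegral_tendsto_integral_Ioi 0 hint.integrableOn Filter.tendsto_id
  obtain ⟨η, hη⟩ : ∃ η, η = (u 0 ^ 4 * (√3 / 12 * (cos α / sin α)) -
    ∫ x in Ioi (0:ℝ), (1 / 2 * u' x ^ 2 - 1 / 6 * u x ^ 6)) / 2 := ⟨_, rfl⟩
  have hηp : 0 < η := by linarith
  have hev := (hlim.eventually_lt_const (show _ < (∫ x in Ioi (0:ℝ),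
    (1 / 2 * u' x ^ 2 - 1 / 6 * u x ^ 6)) + η by linarith)).and (Filter.eventually_ge_atTop 0)
  obtain ⟨N, hN⟩ := Filter.eventually_atTop.1 hev
  have hC0 : 0 ≤ C := (norm_nonneg _).trans (hC (q 0) (hqmem 0 le_rfl))
  have hfin := hu.measure_ge_lt_top (show 0 < η / (M * C + 1) by positivity)
  have : Ici N ⊆ {x | η / (M * C + 1) ≤ u x ^ 2} := by
    intro R hR
    obtain ⟨b1, b2⟩ := hN R hR
    have b3 := hmain R b2
    simp only [id] at b1
    have b4 : η ≤ u R ^ 4 * (√3 / 12 * (cos (q R) / sin (q R))) := by linarith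
    have b5 := (le_abs_self _).trans (hC (q R) (hqmem R b2))
    have b6 : u R ^ 4 * (√3 / 12 * (cos (q R) / sin (q R))) ≤ u R ^ 4 * C := by gcongr
    have b7 : u R ^ 4 * C ≤ u R ^ 2 * (M * C) := by
      have := mul_le_mul_of_nonneg_right (hM R) (mul_nonneg (sq_nonneg (u R)) hC0)
      nlinarith
    simp only [mem_ofPred_eq]
    rw [div_le_iff₀ (by positivity)]
    nlinarith [sq_nonneg (u R)]
  have := (measure_mono this).trans_lt hfin
  simp at this

theorem cot_sum {α β : ℝ} (hα : 0 < α) (hβ : 0 < β) (hs : α + β < π) :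
    2 * (cos ((α + β) / 2) / sin ((α + β) / 2)) ≤ cos α / sin α + cos β / sin β := by
  have sα : 0 < sin α := sin_pos_of_pos_of_lt_pi hα (by linarith)
  have sβ : 0 < sin β := sin_pos_of_pos_of_lt_pi hβ (by linarith)
  obtain ⟨g, hg⟩ : ∃ g, g = (α + β) / 2 := ⟨_, rfl⟩
  obtain ⟨k, hk⟩ : ∃ k, k = (α - β) / 2 := ⟨_, rfl⟩
  have sg : 0 < sin g := sin_pos_of_pos_of_lt_pi (by linarith) (by linarith)
  have cg : 0 < cos g := cos_pos_of_mem_Ioo ⟨by linarith, by linarith⟩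
  have e1 : cos α / sin α + cos β / sin β = (2 * sin g * cos g) / (sin α * sin β) := by
    rw [← sin_two_mul, show 2 * g = α + β by rw [hg]; ring, sin_add]
    field_simp
    ring
  have e2 : sin α * sin β ≤ sin g ^ 2 := by
    rw [show α = g + k by rw [hg, hk]; ring, show β = g - k by rw [hg, hk]; ring, sin_add, sin_sub]
    have a := sin_sq_add_cos_sq g
    have b := sin_sq_add_cos_sq k
    have : (sin g * cos k + cos g * sin k) * (sin g * cos k - cos g * sin k) =
        sin g ^ 2 - sin k ^ 2 := by
      linear_combination (sin g ^ 2) * b - (sin k ^ 2) * a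
    rw [this]; nlinarith [sq_nonneg (sin k)]
  rw [e1, ← hg]
  calc 2 * (cos g / sin g) = (2 * sin g * cos g) / (sin g ^ 2) := by field_simp
    _ ≤ _ := by gcongr

theorem reflect {u u' : ℝ → ℝ} (h : IsH1 u u') :
    IsH1 (fun x => u (-x)) (fun x => -u' (-x)) := by
  obtain ⟨hc, hu, hu', hd⟩ := h
  refine ⟨by fun_prop, hu.comp_neg, ?_, ?_⟩
  · simp only [neg_sq]; exact hu'.comp_neg
  · intro a b hab
    rw [intervalIntegral.integral_neg, intervalIntegral.integral_comp_neg,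
      ← hd _ _ (neg_le_neg hab)]
    ring

theorem lower_bound {u u' : ℝ → ℝ} (h : IsH1 u u') {μ : ℝ} (hμ : 0 < μ) (hm : mass u = μ)
    (hle : μ ≤ √3 * (π / 2 - arcsin (√(3 / 7)))) : 0 ≤ Ffun 6 4 u u' := by
  have h3 : (√3) ^ 2 = 3 := Real.sq_sqrt (by norm_num)
  have h3p : 0 < √3 := by positivity
  have hI := intervalIntegrable_of_isH1 h (by rw [hm]; exact hμ.ne')
  have hr := reflect h
  have hrm : mass (fun x => u (-x)) = μ := by
    rw [← hm]; unfold mass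
    exact integral_neg_eq_self (fun x => u x ^ 2) volume
  have hIr := intervalIntegrable_of_isH1 hr (by rw [hrm]; exact hμ.ne')
  obtain ⟨m1, hm1⟩ : ∃ m, m = ∫ x in Ioi (0:ℝ), u x ^ 2 := ⟨_, rfl⟩
  obtain ⟨m2, hm2⟩ : ∃ m, m = ∫ x in Ioi (0:ℝ), u (-x) ^ 2 := ⟨_, rfl⟩
  have hm1n : 0 ≤ m1 := by rw [hm1]; exact integral_nonneg fun x => sq_nonneg _
  have hm2n : 0 ≤ m2 := by rw [hm2]; exact integral_nonneg fun x => sq_nonneg _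
  have hsum : m1 + m2 = μ := by
    rw [hm1, hm2, integral_comp_neg_Ioi 0 (fun x => u x ^ 2), neg_zero, ← hm, mass, add_comm,
      ← setIntegral_union (Iic_disjoint_Ioi le_rfl) measurableSet_Ioi h.2.1.integrableOn
        h.2.1.integrableOn, Iic_union_Ioi, setIntegral_univ]
  have hint : Integrable (fun x => 1 / 2 * u' x ^ 2 - 1 / 6 * u x ^ 6) :=
    (h.2.2.1.const_mul _).sub ((u_six h hI).const_mul _)
  have hE : (∫ x in Ioi (0:ℝ), (1 / 2 * u' x ^ 2 - 1 / 6 * u x ^ 6)) +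
      (∫ x in Ioi (0:ℝ), (1 / 2 * (-u' (-x)) ^ 2 - 1 / 6 * u (-x) ^ 6)) =
      (1 / 2) * (∫ x, (u' x) ^ 2) - (1 / 6) * (∫ x, (u x) ^ 6) := by
    simp only [neg_sq]
    rw [integral_comp_neg_Ioi 0 (fun x => 1 / 2 * u' x ^ 2 - 1 / 6 * u x ^ 6), neg_zero, add_comm,
      ← setIntegral_union (Iic_disjoint_Ioi le_rfl) measurableSet_Ioi hint.integrableOn
        hint.integrableOn, Iic_union_Ioi, setIntegral_univ,
      integral_sub (h.2.2.1.const_mul _) ((u_six h hI).const_mul _), integral_const_mul,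
      integral_const_mul]
  obtain ⟨θ, hθ⟩ : ∃ θ, θ = μ / √3 := ⟨_, rfl⟩
  have hθp : 0 < θ := by rw [hθ]; positivity
  have hθT : θ ≤ π / 2 - arcsin (√(3 / 7)) := by
    rw [hθ, div_le_iff₀ h3p]; linarith
  have hasin : 0 < arcsin (√(3 / 7)) := arcsin_pos.2 (by positivity)
  have hθ2 : θ < π / 2 := by linarith
  have hdsum : 2 / √3 * m1 + 2 / √3 * m2 = 2 * θ := by
    rw [← mul_add, hsum, hθ]; ring
  rw [Ffun_eq, ← hE]
  have hb : ∀ ε, 0 < ε → ε < π / 2 - θ → u 0 ^ 4 * (√3 / 6 * (cos (θ + ε) / sin (θ + ε))) ≤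
      (∫ x in Ioi (0:ℝ), (1 / 2 * u' x ^ 2 - 1 / 6 * u x ^ 6)) +
      (∫ x in Ioi (0:ℝ), (1 / 2 * (-u' (-x)) ^ 2 - 1 / 6 * u (-x) ^ 6)) := by
    intro ε hε hε2
    have p1 : 0 ≤ 2 / √3 * m1 := by positivity
    have p2 : 0 ≤ 2 / √3 * m2 := by positivity
    have b1 := half_bound h hI (α := 2 / √3 * m1 + ε) (by rw [hm1]; linarith) (by linarith)
    have b2 := half_bound hr hIr (α := 2 / √3 * m2 + ε) (by rw [hm2]; linarith) (by linarith)
    have b3 := cot_sum (α := 2 / √3 * m1 + ε) (β := 2 / √3 * m2 + ε) (by linarith) (by linarith)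
      (by linarith)
    rw [show (2 / √3 * m1 + ε + (2 / √3 * m2 + ε)) / 2 = θ + ε by linarith] at b3
    simp only [neg_zero] at b2
    have b4 := mul_le_mul_of_nonneg_left b3 (show 0 ≤ u 0 ^ 4 * (√3 / 12) by positivity)
    nlinarith
  have hsθ : 0 < sin θ := sin_pos_of_pos_of_lt_pi hθp (by linarith)
  have hlim : Filter.Tendsto (fun ε => u 0 ^ 4 * (√3 / 6 * (cos (θ + ε) / sin (θ + ε))))
      (nhdsWithin 0 (Ioi 0)) (nhds (u 0 ^ 4 * (√3 / 6 * (cos θ / sin θ)))) := by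
    have : ContinuousAt (fun ε => u 0 ^ 4 * (√3 / 6 * (cos (θ + ε) / sin (θ + ε)))) 0 := by
      refine continuousAt_const.mul (continuousAt_const.mul (ContinuousAt.div ?_ ?_ ?_))
      · fun_prop
      · fun_prop
      · simpa using hsθ.ne'
    have h2 := this.tendsto
    simp only [add_zero] at h2
    exact h2.mono_left nhdsWithin_le_nhds
  have hfin := le_of_tendsto hlim (by
    filter_upwards [Ioo_mem_nhdsGT (show (0:ℝ) < π / 2 - θ by linarith)] with ε hε
    exact hb ε hε.1 hε.2)
  -- cot θ ≥ √3 / 2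
  have hcos : √(3 / 7) ≤ cos θ := by
    have := cos_le_cos_of_nonneg_of_le_pi hθp.le (by linarith [pi_pos]) hθT
    rw [cos_pi_div_two_sub, sin_arcsin (by linarith [Real.sqrt_nonneg (3/7 : ℝ)])
      (Real.sqrt_le_one.2 (by norm_num))] at this
    exact this
  have hcos2 : 3 / 7 ≤ cos θ ^ 2 := by
    rw [← Real.sq_sqrt (show (0:ℝ) ≤ 3 / 7 by norm_num)]
    exact pow_le_pow_left₀ (Real.sqrt_nonneg _) hcos 2
  have hcosp : 0 < cos θ := lt_of_lt_of_le (by positivity) hcos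
  have hcot : √3 / 2 ≤ cos θ / sin θ := by
    rw [le_div_iff₀ hsθ]
    have : √3 / 2 * sin θ ≤ cos θ := by
      refine (sq_le_sq₀ (by positivity) hcosp.le).1 ?_
      rw [mul_pow, div_pow, h3]
      nlinarith [sin_sq_add_cos_sq θ]
    exact this
  have hk : 1 / 4 ≤ √3 / 6 * (cos θ / sin θ) := by
    have := mul_le_mul_of_nonneg_left hcot (show 0 ≤ √3 / 6 by positivity)
    nlinarith
  have := mul_le_mul_of_nonneg_left hk (show 0 ≤ u 0 ^ 4 by positivity)
  linarith

theorem stmt13 (μ : ℝ) (hμ : 0 < μ) :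
    (μ ≤ Real.sqrt 3 * (Real.pi / 2 - Real.arcsin (Real.sqrt (3 / 7))) →
      (∀ u u' : ℝ → ℝ, IsH1 u u' → mass u = μ → 0 ≤ Ffun 6 4 u u') ∧
      (∀ ε : ℝ, 0 < ε →
        ∃ u u' : ℝ → ℝ, IsH1 u u' ∧ mass u = μ ∧ Ffun 6 4 u u' < ε)) ∧
    (Real.sqrt 3 * (Real.pi / 2 - Real.arcsin (Real.sqrt (3 / 7))) < μ →
      ∀ M : ℝ, ∃ u u' : ℝ → ℝ, IsH1 u u' ∧ mass u = μ ∧ Ffun 6 4 u u' < M) := by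
  obtain ⟨w, w', hw, hwm, hwF, hw0⟩ := soliton_exists
  have hmp : 0 < √3 * (π / 2 - arcsin (√(3 / 7))) := by
    have : arcsin (√(3 / 7)) < π / 2 := arcsin_lt_pi_div_two.2 (by
      rw [Real.sqrt_lt' (by norm_num)]; norm_num)
    have : 0 < √3 := by positivity
    apply mul_pos this; linarith
  generalize hms : √3 * (π / 2 - arcsin (√(3 / 7))) = ms at *
  obtain ⟨t, ht⟩ : ∃ t, t = √(μ / ms) := ⟨_, rfl⟩
  have ht2 : t ^ 2 = μ / ms := by rw [ht, Real.sq_sqrt (by positivity)]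
  obtain ⟨hv, hvm, hvF⟩ := amp_lemma hw t
  have hvm' : mass (fun x => t * w x) = μ := by
    rw [hvm, ht2, hwm]; field_simp
  refine ⟨fun hle => ⟨fun u u' h hm => lower_bound h hμ hm (by rw [hms]; exact hle), ?_⟩, ?_⟩
  · intro ε hε
    obtain ⟨F, hF⟩ : ∃ F, F = Ffun 6 4 (fun x => t * w x) (fun x => t * w' x) := ⟨_, rfl⟩
    obtain ⟨v, v', h1, h2, h3⟩ := scale_lemma hv (l := √(ε / (|F| + 1))) (by positivity)
    refine ⟨v, v', h1, h2.trans hvm', ?_⟩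
    rw [h3, ← hF, Real.sq_sqrt (by positivity), div_mul_eq_mul_div, div_lt_iff₀ (by positivity)]
    nlinarith [le_abs_self F]
  · intro hlt M
    obtain ⟨F, hF⟩ : ∃ F, F = Ffun 6 4 (fun x => t * w x) (fun x => t * w' x) := ⟨_, rfl⟩
    have ht1 : 1 < t ^ 2 := by rw [ht2, lt_div_iff₀ hmp]; linarith
    have hFn : F < 0 := by
      rw [hF, hvF, hwF]
      have hP : 0 ≤ (∫ x, (w x) ^ 6) / 6 := by
        have : 0 ≤ ∫ x, (w x) ^ 6 := integral_nonneg fun x => by positivity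
        positivity
      have hA : 0 < w 0 ^ 4 / 4 := by positivity
      have ht4 : 1 - t ^ 4 ≤ 0 := by nlinarith
      have a1 : t ^ 2 * (1 - t ^ 4) * ((∫ x, (w x) ^ 6) / 6) ≤ 0 :=
        mul_nonpos_of_nonpos_of_nonneg
          (mul_nonpos_of_nonneg_of_nonpos (sq_nonneg t) ht4) hP
      have a2 : t ^ 2 * (1 - t ^ 2) * (w 0 ^ 4 / 4) < 0 :=
        mul_neg_of_neg_of_pos (mul_neg_of_pos_of_neg (by linarith) (by linarith)) hA
      linarith
    obtain ⟨v, v', h1, h2, h3⟩ := scale_lemma hv (l := √((|M| + 1) / (-F)))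
      (Real.sqrt_pos.2 (div_pos (by positivity) (by linarith)))
    refine ⟨v, v', h1, h2.trans hvm', ?_⟩
    rw [h3, ← hF, Real.sq_sqrt (div_nonneg (by positivity) (by linarith))]
    have : (|M| + 1) / (-F) * F = -(|M| + 1) := by
      have : F ≠ 0 := hFn.ne
      field_simp
    rw [this]
    linarith [neg_abs_le M]
end
end

section
/- Let 2 < q < 4 and μ > 0. Suppose D_q is bounded below on the set of u ∈ H¹(ℝ) with ‖u‖₂² = μ and that there exists u₀ in this set with D_q(u₀) < 0. Then the constrained infimum is attained: there exists u ∈ H¹(ℝ) with ‖u‖₂² = μ such that D_q(u) ≤ D_q(v) for every v ∈ H¹(ℝ) with ‖v‖₂² = μ. -/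
open MeasureTheory Real Set

noncomputable section

theorem s16_cont (f : ℝ → ℝ) (hf : Continuous f) (x : ℝ)
    (h : ∀ a b, a < x → x < b → f b = f a) : ∀ y, f y = f x := by
  have hr : ∀ a, a < x → f a = f x := by
    intro a ha
    have h1 : Filter.Tendsto f (nhdsWithin x (Ioi x)) (nhds (f x)) :=
      hf.continuousAt.tendsto.mono_left nhdsWithin_le_nhds
    have h2 : Filter.Tendsto f (nhdsWithin x (Ioi x)) (nhds (f a)) := by
      refine tendsto_const_nhds.congr' ?_
      filter_upwards [self_mem_nhdsWithin] with b hb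
      exact (h a b ha hb).symm
    exact tendsto_nhds_unique h2 h1
  intro y
  rcases lt_trichotomy y x with hy | hy | hy
  · exact hr y hy
  · rw [hy]
  · rw [h (x - 1) y (by linarith) hy]
    exact hr _ (by linarith)

theorem s16_small (g : ℝ → ℝ) (hg : Integrable g) (ε : ℝ) (hε : 0 < ε) :
    ∃ R : ℝ, 0 < R ∧ g R < ε := by
  by_contra! hcon
  have h1 : IntegrableOn (fun _ : ℝ => ε) (Ioi (0:ℝ)) := by
    refine Integrable.mono' hg.integrableOn aestronglyMeasurable_const ?_
    filter_upwards [ae_restrict_mem measurableSet_Ioi] with x hx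
    rw [Real.norm_eq_abs, abs_of_pos hε]
    exact hcon x hx
  rw [integrableOn_const_iff] at h1
  simp [hε.ne'] at h1

theorem s16_ftc (v v' : ℝ → ℝ) (hv : IsH1 v v') (hl : LocallyIntegrable v') (a b : ℝ)
    (hab : a ≤ b) : IntervalIntegrable (fun x => 2 * (v x * v' x)) volume a b ∧
      v b ^ 2 - v a ^ 2 = ∫ x in a..b, 2 * (v x * v' x) := by
  obtain ⟨hc, -, -, hI⟩ := hv
  have hi : ∀ c d, IntervalIntegrable v' volume c d := fun c d =>
    intervalIntegrable_iff.mpr <|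
      (hl.integrableOn_isCompact isCompact_uIcc).mono_set uIoc_subset_uIcc
  have hG := (hi a b).absolutelyContinuousOnInterval_intervalIntegral (c := a) (by simp)
  have hC : AbsolutelyContinuousOnInterval (fun _ : ℝ => v a) a b :=
    ContDiffOn.absolutelyContinuousOnInterval contDiffOn_const
  have hV := hC.fun_add hG
  have heq : (fun x => v a + ∫ t in a..x, v' t) = v := by
    funext x
    rcases le_total a x with h | h
    · rw [← hI a x h]; ring
    · rw [intervalIntegral.integral_symm, ← hI x a h]; ring
  rw [heq] at hV
  have hd : ∀ᵐ x, HasDerivAt v (v' x) x := by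
    filter_upwards [LocallyIntegrable.ae_hasDerivAt_integral hl] with x hx
    have := (hx a).const_add (v a)
    rwa [heq] at this
  refine ⟨((hi a b).continuousOn_mul hc.continuousOn).const_mul 2, ?_⟩
  have := hV.integral_deriv_mul_eq_sub hV
  rw [pow_two, pow_two, ← this]
  apply intervalIntegral.integral_congr_ae
  filter_upwards [hd] with x hx _
  rw [hx.deriv]; ring

theorem s16_point (v v' : ℝ → ℝ) (hv : IsH1 v v') (a : ℝ) (ha : 0 < a) :
    2 * v 0 ^ 2 ≤ a * mass v + (∫ x, v' x ^ 2) / a := by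
  by_cases hl : LocallyIntegrable v'
  · refine le_of_forall_pos_le_add fun ε hε => ?_
    have hv2 := hv.2.1
    have hv'2 := hv.2.2.1
    obtain ⟨R, hR, hRe⟩ := s16_small (fun x => v x ^ 2 + v (-x) ^ 2)
      (hv2.add hv2.comp_neg) ε hε
    obtain ⟨i1, e1⟩ := s16_ftc v v' hv hl 0 R hR.le
    obtain ⟨i2, e2⟩ := s16_ftc v v' hv hl (-R) 0 (by linarith)
    have hg : Integrable (fun x => a * v x ^ 2 + v' x ^ 2 / a) :=
      (hv2.const_mul a).add (hv'2.div_const a)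
    have hp : ∀ x, |2 * (v x * v' x)| ≤ a * v x ^ 2 + v' x ^ 2 / a := by
      intro x
      have h1 : a * v x ^ 2 + v' x ^ 2 / a - 2 * (v x * v' x) = (a * v x - v' x) ^ 2 / a := by
        field_simp; ring
      have h2 : a * v x ^ 2 + v' x ^ 2 / a + 2 * (v x * v' x) = (a * v x + v' x) ^ 2 / a := by
        field_simp; ring
      have h3 : 0 ≤ (a * v x - v' x) ^ 2 / a := by positivity
      have h4 : 0 ≤ (a * v x + v' x) ^ 2 / a := by positivity
      rw [abs_le]; constructor <;> linarith
    have b1 : -(∫ x in (0:ℝ)..R, 2 * (v x * v' x)) ≤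
        ∫ x in (0:ℝ)..R, (a * v x ^ 2 + v' x ^ 2 / a) := by
      rw [← intervalIntegral.integral_neg]
      exact intervalIntegral.integral_mono_on hR.le i1.neg hg.intervalIntegrable
        fun x _ => (neg_le_abs _).trans (hp x)
    have b2 : (∫ x in (-R)..0, 2 * (v x * v' x)) ≤
        ∫ x in (-R)..0, (a * v x ^ 2 + v' x ^ 2 / a) :=
      intervalIntegral.integral_mono_on (by linarith) i2 hg.intervalIntegrable
        fun x _ => (le_abs_self _).trans (hp x)
    have b3 := intervalIntegral.integral_add_adjacent_intervals
      (hg.intervalIntegrable (a := -R) (b := 0)) (hg.intervalIntegrable (a := 0) (b := R))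
    have b4 : ∫ x in (-R)..R, (a * v x ^ 2 + v' x ^ 2 / a) ≤
        ∫ x, (a * v x ^ 2 + v' x ^ 2 / a) := by
      rw [intervalIntegral.integral_of_le (by linarith)]
      exact setIntegral_le_integral hg (Filter.Eventually.of_forall fun x => by
        show 0 ≤ a * v x ^ 2 + v' x ^ 2 / a
        positivity)
    have b5 : ∫ x, (a * v x ^ 2 + v' x ^ 2 / a) = a * mass v + (∫ x, v' x ^ 2) / a := by
      rw [integral_add (hv2.const_mul a) (hv'2.div_const a), integral_const_mul,
        integral_div]
      rfl
    linarith
  · have h0 : v 0 = 0 := by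
      unfold LocallyIntegrable at hl
      push Not at hl
      obtain ⟨x, hx⟩ := hl
      have hconst := s16_cont v hv.1 x (by
        intro c d hc hd
        have := hv.2.2.2 c d (by linarith)
        rw [intervalIntegral.integral_undef] at this
        · linarith
        · intro hi
          apply hx
          rw [intervalIntegrable_iff_integrableOn_Ioc_of_le (by linarith)] at hi
          exact ⟨_, Ioc_mem_nhds hc hd, hi⟩)
      have hi := hv.2.1
      simp only [hconst] at hi
      rw [integrable_const_iff] at hi
      rw [hconst]
      rcases hi with hi | hi
      · simpa using hi
      · exact absurd hi.measure_univ_lt_top (by simp)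
    rw [h0]
    have h1 : 0 ≤ mass v := integral_nonneg fun x => sq_nonneg (v x)
    have h2 : 0 ≤ ∫ x, v' x ^ 2 := integral_nonneg fun x => sq_nonneg (v' x)
    have h3 : 0 ≤ a * mass v + (∫ x, v' x ^ 2) / a := by positivity
    simpa using h3

theorem s16_gn (v v' : ℝ → ℝ) (hv : IsH1 v v') (μ : ℝ) (hμ : 0 < μ) (hm : mass v = μ) :
    μ * (v 0 ^ 2 / μ) ^ 2 ≤ ∫ x, v' x ^ 2 := by
  rcases eq_or_ne (v 0) 0 with h | h
  · have h2 : 0 ≤ ∫ x, v' x ^ 2 := integral_nonneg fun x => sq_nonneg (v' x)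
    simpa [h] using h2
  · have hs : 0 < v 0 ^ 2 / μ := by positivity
    have := s16_point v v' hv _ hs
    rw [hm] at this
    have e : v 0 ^ 2 = v 0 ^ 2 / μ * μ := by field_simp
    set s := v 0 ^ 2 / μ
    rw [e] at this
    have h2 : s * μ ≤ (∫ x, v' x ^ 2) / s := by linarith
    rw [le_div_iff₀ hs] at h2
    linarith

theorem s16_exp (μ a : ℝ) (hμ : 0 < μ) (ha : 0 < a) :
    ∃ u u' : ℝ → ℝ, IsH1 u u' ∧ mass u = μ ∧ (∫ x, u' x ^ 2) = μ * a ^ 2 ∧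
      |u 0| = √(μ * a) := by
  set A := √(μ * a) with hA
  have hA2 : A ^ 2 = μ * a := Real.sq_sqrt (by positivity)
  have hA0 : 0 ≤ A := Real.sqrt_nonneg _
  let u : ℝ → ℝ := fun x => A * Real.exp (-a * |x|)
  let u' : ℝ → ℝ := fun x => if x ≤ 0 then a * u x else -a * u x
  have hu2 : ∀ x, u x ^ 2 = μ * a * Real.exp (-(2 * a) * |x|) := by
    intro x
    simp only [u]
    rw [mul_pow, hA2, ← Real.exp_nat_mul]
    congr 2; push_cast; ring
  have hu'2 : ∀ x, u' x ^ 2 = a ^ 2 * u x ^ 2 := by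
    intro x; simp only [u']; split_ifs <;> ring
  have hm : mass u = μ := by
    unfold mass
    simp_rw [hu2]
    rw [integral_const_mul, integral_comp_abs (f := fun x => Real.exp (-(2 * a) * x)),
      integral_exp_mul_Ioi (by linarith)]
    simp; field_simp
  have hint : Integrable (fun x => u x ^ 2) := by
    apply Integrable.of_integral_ne_zero
    change mass u ≠ 0
    rw [hm]; exact hμ.ne'
  have hc : Continuous u := by fun_prop
  refine ⟨u, u', ⟨hc, hint, ?_, ?_⟩, hm, ?_, ?_⟩
  · simp_rw [hu'2]; exact hint.const_mul _
  · intro c d hcd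
    symm
    refine integral_eq_of_hasDerivAt_off_countable u u' (s := {0})
      (countable_singleton 0) hc.continuousOn ?_ ?_
    · rintro x ⟨-, hx⟩
      have hx0 : x ≠ 0 := hx
      rcases lt_or_gt_of_ne hx0 with h | h
      · have h1 : HasDerivAt (fun x => A * Real.exp (a * x)) (A * (Real.exp (a * x) * (a * 1))) x :=
          (((hasDerivAt_id x).const_mul a).exp).const_mul A
        have h2 : u =ᶠ[nhds x] fun x => A * Real.exp (a * x) := by
          filter_upwards [gt_mem_nhds h] with y hy
          simp only [u]; rw [abs_of_neg hy]; congr 2; ring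
        have h3 := h1.congr_of_eventuallyEq h2
        convert h3 using 1
        simp only [u', u]; rw [if_pos h.le, abs_of_neg h, neg_mul_neg]; ring
      · have h1 : HasDerivAt (fun x => A * Real.exp (-a * x))
            (A * (Real.exp (-a * x) * (-a * 1))) x :=
          (((hasDerivAt_id x).const_mul (-a)).exp).const_mul A
        have h2 : u =ᶠ[nhds x] fun x => A * Real.exp (-a * x) := by
          filter_upwards [lt_mem_nhds h] with y hy
          simp only [u]; rw [abs_of_pos hy]
        have h3 := h1.congr_of_eventuallyEq h2
        convert h3 using 1
        simp only [u', u]; rw [if_neg h.not_ge, abs_of_pos h]; ring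
    · have hmeas : Measurable u' :=
        Measurable.ite measurableSet_Iic (hc.measurable.const_mul _) (hc.measurable.const_mul _)
      refine (((hc.const_mul a).intervalIntegrable c d)).mono_fun
        hmeas.aestronglyMeasurable ?_
      refine Filter.Eventually.of_forall fun x => ?_
      simp only [u']
      split_ifs <;> simp
  · simp_rw [hu'2]
    rw [integral_const_mul]
    change a ^ 2 * mass u = _
    rw [hm]; ring
  · simp [u, abs_of_nonneg hA0]

theorem s16_min (q μ : ℝ) (hq : 2 < q) (hq' : q < 4) (hμ : 0 < μ) :
    ∃ a : ℝ, 0 < a ∧ ∀ s : ℝ, 0 ≤ s →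
      1 / 2 * (μ * a ^ 2) - 1 / q * √(μ * a) ^ q ≤ 1 / 2 * (μ * s ^ 2) - 1 / q * √(μ * s) ^ q := by
  have hk : ∀ s : ℝ, 0 ≤ s → √(μ * s) ^ q = μ ^ (q / 2) * (s ^ 2) ^ (q / 4) := by
    intro s hs
    rw [Real.sqrt_eq_rpow, ← Real.rpow_mul (by positivity), Real.mul_rpow hμ.le hs,
      ← Real.rpow_natCast s 2, ← Real.rpow_mul hs]
    congr 2 <;> push_cast <;> ring
  have hM : 0 < μ ^ (q / 2) := by positivity
  set M := μ ^ (q / 2) with hMdef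
  let c : ℝ := 2 * μ / M
  have hc : 0 < c := by positivity
  let x0 : ℝ := c ^ (1 / (q / 4 - 1))
  have hx0 : 0 < x0 := by positivity
  have hx0e : x0 ^ (q / 4 - 1) = c := by
    simp only [x0]
    rw [← Real.rpow_mul hc.le, one_div, inv_mul_cancel₀ (by linarith), Real.rpow_one]
  have hx0f : M * x0 ^ (q / 4) = 2 * μ * x0 := by
    have : x0 ^ (q / 4) = x0 ^ (q / 4 - 1) * x0 := by
      rw [Real.rpow_sub_one hx0.ne']; field_simp
    rw [this, hx0e]; simp only [c]; field_simp
  refine ⟨√x0, by positivity, fun s hs => ?_⟩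
  rw [hk _ (Real.sqrt_nonneg _), hk s hs, Real.sq_sqrt hx0.le]
  have hB := rpow_one_add_le_one_add_mul_self (s := s ^ 2 / x0 - 1) (p := q / 4)
    (by have : 0 ≤ s ^ 2 / x0 := by positivity
        linarith) (by linarith) (by linarith)
  rw [add_sub_cancel, Real.div_rpow (by positivity) hx0.le, div_le_iff₀ (by positivity)] at hB
  have h1 := mul_le_mul_of_nonneg_left hB hM.le
  have h2 : M * ((1 + q / 4 * (s ^ 2 / x0 - 1)) * x0 ^ (q / 4)) =
      2 * μ * x0 + q / 4 * (2 * μ * (s ^ 2 - x0)) := by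
    rw [mul_left_comm, hx0f]; field_simp
  rw [h2] at h1
  rw [hx0f]
  have hq0 : 0 < q := by linarith
  have h3 := mul_le_mul_of_nonneg_left h1 (show 0 ≤ 1 / q by positivity)
  have h4 : 1 / q * (2 * μ * x0 + q / 4 * (2 * μ * (s ^ 2 - x0))) =
      1 / q * (2 * μ * x0) + 1 / 2 * (μ * (s ^ 2 - x0)) := by field_simp; ring
  linarith

theorem stmt16 (q μ : ℝ) (hq : 2 < q) (hq' : q < 4) (hμ : 0 < μ)
    (hbdd : ∃ C : ℝ, ∀ u u' : ℝ → ℝ, IsH1 u u' → mass u = μ → C ≤ Dfun q u u')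
    (hneg : ∃ u₀ u₀' : ℝ → ℝ, IsH1 u₀ u₀' ∧ mass u₀ = μ ∧ Dfun q u₀ u₀' < 0) :
    ∃ u u' : ℝ → ℝ, IsH1 u u' ∧ mass u = μ ∧
      ∀ v v' : ℝ → ℝ, IsH1 v v' → mass v = μ → Dfun q u u' ≤ Dfun q v v' := by
  obtain ⟨a, ha, hmin⟩ := s16_min q μ hq hq' hμ
  obtain ⟨u, u', hu, hm, hd, h0⟩ := s16_exp μ a hμ ha
  refine ⟨u, u', hu, hm, fun v v' hv hvm => ?_⟩
  have h1 := s16_gn v v' hv μ hμ hvm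
  have h2 := hmin (v 0 ^ 2 / μ) (by positivity)
  rw [mul_div_cancel₀ _ hμ.ne', Real.sqrt_sq_eq_abs] at h2
  unfold Dfun
  rw [hd, h0]
  linarith
end
end
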